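/- arXiv:1508.00099 — 3 statements merged into one kernel-verified Lean document; each statement's English description precedes it below -/
import Mathlib

section
/- Let X = (X_t)_{t∈[0,1]} be a centered Gaussian process such that ‖X_t − X_s‖₂ ≥ C|t−s|^H for all t, s ∈ [0,1], with constants C > 0 and H ∈ (0,1). Then for every integer n ≥ 1, E[max_{0≤i≤n} X_{i/n}] ≥ C·n^{−H}·√(log₂(n+1)/(2π)). -/
open MeasureTheory ProbabilityTheory Real Set Filter Topology

noncomputable section

/-- `X` is a centered Gaussian process on the time set `S`: every finite linear
combination `∑ i, c i * X (ts i)` of its values at times in `S` is a centered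
Gaussian random variable. -/
def IsCenteredGaussianOn {Ω : Type} [MeasurableSpace Ω] (μ : Measure Ω)
    (X : ℝ → Ω → ℝ) (S : Set ℝ) : Prop :=
  (∀ t ∈ S, Measurable (X t)) ∧
  ∀ (k : ℕ) (c : Fin k → ℝ) (ts : Fin k → ℝ), (∀ i, ts i ∈ S) →
    ∃ v : NNReal, μ.map (fun ω => ∑ i, c i * X (ts i) ω) = gaussianReal 0 v

/-- The `L²`-norm `‖Y‖₂ = (E Y²)^{1/2}` of a real random variable. -/
def l2norm {Ω : Type} [MeasurableSpace Ω] (μ : Measure Ω) (Y : Ω → ℝ) : ℝ :=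
  Real.sqrt (∫ ω, (Y ω) ^ 2 ∂μ)

/-- The expected supremum `E [sup_{0 ≤ t ≤ 1} X_t]`. -/
def expMax {Ω : Type} [MeasurableSpace Ω] (μ : Measure Ω) (X : ℝ → Ω → ℝ) : ℝ :=
  ∫ ω, (⨆ t : Icc (0:ℝ) 1, X t.1 ω) ∂μ

/-- The expected maximum over the grid: `E [max_{0 ≤ i ≤ n} X_{i/n}]`. -/
def expMaxGrid {Ω : Type} [MeasurableSpace Ω] (μ : Measure Ω) (X : ℝ → Ω → ℝ) (n : ℕ) : ℝ :=
  ∫ ω, (⨆ i : Fin (n + 1), X (((i : ℕ) : ℝ) / (n : ℝ)) ω) ∂μ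

/-- `B` is a fractional Brownian motion with Hurst parameter `H`: a centered Gaussian
process on `[0,∞)` with a.s. continuous sample paths, `B 0 = 0`, and covariance
`E[B_s B_t] = (s^{2H} + t^{2H} - |t-s|^{2H}) / 2`. -/
def IsFBM {Ω : Type} [MeasurableSpace Ω] (μ : Measure Ω) (H : ℝ) (B : ℝ → Ω → ℝ) : Prop :=
  IsCenteredGaussianOn μ B (Ici 0) ∧
  (∀ᵐ ω ∂μ, ContinuousOn (fun t => B t ω) (Ici 0)) ∧
  (∀ᵐ ω ∂μ, B 0 ω = 0) ∧
  ∀ s t : ℝ, 0 ≤ s → 0 ≤ t →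
    ∫ ω, B s ω * B t ω ∂μ = (s ^ (2 * H) + t ^ (2 * H) - |t - s| ^ (2 * H)) / 2

/-- Stein's identity for a centered real Gaussian. -/
theorem integral_id_mul_gaussianReal {v : NNReal} {f f' : ℝ → ℝ} {M : ℝ}
    (hf : ∀ x, HasDerivAt f (f' x) x) (hf'c : Continuous f')
    (hM : ∀ x, |f x| ≤ M) (hM' : ∀ x, |f' x| ≤ M) :
    ∫ x, x * f x ∂gaussianReal 0 v = v * ∫ x, f' x ∂gaussianReal 0 v := by
  by_cases hv : v = 0
  · simp [hv]
  have hv' : (v : ℝ) ≠ 0 := by exact_mod_cast hv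
  have hfc : Continuous f := continuous_iff_continuousAt.2 fun x ↦ (hf x).continuousAt
  have hpdf (x : ℝ) : HasDerivAt (gaussianPDFReal 0 v)
      (-(x / v) * gaussianPDFReal 0 v x) x := by
    have h1 : HasDerivAt (fun x : ℝ ↦ -(x - 0) ^ 2 / (2 * v)) (-(x / v)) x := by
      have := ((((hasDerivAt_id x).sub_const 0).pow 2).neg).div_const (2 * (v : ℝ))
      refine this.congr_deriv ?_
      simp
      field_simp
    refine (h1.exp.const_mul (√(2 * π * v))⁻¹).congr_deriv ?_
    simp only [gaussianPDFReal]
    ring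
  have hint : Integrable (fun x ↦ x * gaussianPDFReal 0 v x) := by
    have h := (memLp_id_gaussianReal (μ := 0) (v := v) 1).integrable le_rfl
    rw [gaussianReal_of_var_ne_zero _ hv, gaussianPDF_def,
      integrable_withDensity_iff (by fun_prop) (by simp)] at h
    simpa [gaussianPDFReal_nonneg] using h
  have key := integral_mul_deriv_eq_deriv_mul_of_integrable (fun x _ ↦ hf x) (fun x _ ↦ hpdf x)
    (by
      have := (hint.bdd_mul (c := M) hfc.aestronglyMeasurable (ae_of_all _ hM)).const_mul
        (-(v : ℝ)⁻¹)
      refine this.congr (ae_of_all _ fun x ↦ ?_)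
      simp only [Pi.mul_apply]
      ring)
    ((integrable_gaussianPDFReal 0 v).bdd_mul (c := M) hf'c.aestronglyMeasurable (ae_of_all _ hM'))
    ((integrable_gaussianPDFReal 0 v).bdd_mul (c := M) hfc.aestronglyMeasurable (ae_of_all _ hM))
  rw [integral_gaussianReal_eq_integral_smul hv, integral_gaussianReal_eq_integral_smul hv]
  have e1 : ∫ x, gaussianPDFReal 0 v x • (x * f x)
      = -v * ∫ x, f x * (-(x / v) * gaussianPDFReal 0 v x) := by
    rw [← integral_const_mul]
    refine integral_congr_ae (ae_of_all _ fun x ↦ ?_)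
    simp only [smul_eq_mul]
    field_simp
  rw [e1, key]
  simp only [smul_eq_mul, mul_comm (gaussianPDFReal 0 v _)]
  ring

/-- Gaussian integration by parts: for jointly Gaussian `(W, Z)` with `W` centered,
`E[W F(Z)]` is the expectation of the derivative of `F` in the direction `Cov(W, Z)`. -/
theorem ProbabilityTheory.HasGaussianLaw.integral_mul_comp {Ω : Type*} [MeasurableSpace Ω]
    {P : Measure Ω} {ι : Type*} [Fintype ι] {W : Ω → ℝ} {Z : ι → Ω → ℝ}
    (h : HasGaussianLaw (fun ω ↦ (W ω, fun i ↦ Z i ω)) P) (hW : ∫ ω, W ω ∂P = 0)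
    {F G : (ι → ℝ) → ℝ} {M : ℝ} (hF : Continuous F) (hG : Continuous G)
    (hFM : ∀ z, |F z| ≤ M) (hGM : ∀ z, |G z| ≤ M)
    (hFG : ∀ z, HasDerivAt (fun t : ℝ ↦ F (z + t • fun i ↦ cov[W, Z i; P])) (G z) 0) :
    ∫ ω, W ω * F (fun i ↦ Z i ω) ∂P = ∫ ω, G (fun i ↦ Z i ω) ∂P := by
  have := h.isProbabilityMeasure
  set c : ι → ℝ := fun i ↦ cov[W, Z i; P] with hc
  have hWg : HasGaussianLaw W P := h.fst
  have hZg : HasGaussianLaw (fun ω i ↦ Z i ω) P := h.snd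
  have hW2 : MemLp W 2 P := hWg.memLp_two
  have hZ2 (i : ι) : MemLp (Z i) 2 P := (hZg.eval i).memLp_two
  set v := Var[W; P] with hv_def
  by_cases hv : v = 0
  · have hW0 : W =ᵐ[P] 0 := by
      filter_upwards [ae_eq_integral_of_variance_eq_zero hW2 hv] with ω hω
      simp [hω, hW]
    have hc0 : c = 0 := by
      ext i
      refine integral_eq_zero_of_ae ?_
      filter_upwards [hW0] with ω hω
      simp [hω, hW]
    have hG0 (z : ι → ℝ) : G z = 0 := by
      have := hFG z
      simp only [hc0, smul_zero, add_zero] at this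
      exact this.unique (hasDerivAt_const _ _)
    have : ∫ ω, W ω * F (fun i ↦ Z i ω) ∂P = ∫ ω, (0 : ℝ) ∂P := by
      refine integral_congr_ae ?_
      filter_upwards [hW0] with ω hω
      simp [hω]
    simp [this, hG0]
  have hvpos : 0 < v := lt_of_le_of_ne (variance_nonneg _ _) (Ne.symm hv)
  set R : ι → Ω → ℝ := fun i ω ↦ Z i ω - (v⁻¹ * c i) * W ω with hR
  have hWR : HasGaussianLaw (fun ω ↦ ((fun _ : Unit ↦ W ω), fun i ↦ R i ω)) P := by
    let L : (ℝ × (ι → ℝ)) →L[ℝ] ((Unit → ℝ) × (ι → ℝ)) :=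
      (ContinuousLinearMap.pi fun _ ↦ ContinuousLinearMap.fst ℝ ℝ (ι → ℝ)).prod
        (ContinuousLinearMap.pi fun i ↦
          (ContinuousLinearMap.proj i).comp (ContinuousLinearMap.snd ℝ ℝ (ι → ℝ)) -
            (v⁻¹ * c i) • ContinuousLinearMap.fst ℝ ℝ (ι → ℝ))
    exact h.map_fun L
  have hind : IndepFun W (fun ω i ↦ R i ω) P := by
    have := hWR.indepFun_of_covariance_eval (X := fun _ ↦ W) (fun _ i ↦ by
      have : R i = fun ω ↦ Z i ω - (fun ω ↦ (v⁻¹ * c i) * W ω) ω := rfl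
      rw [this, covariance_fun_sub_right hW2 (hZ2 i) (hW2.const_mul _),
        covariance_const_mul_right, covariance_self hWg.aemeasurable]
      simp only [hc, ← hv_def]
      field_simp
      ring)
    exact this.comp (φ := fun u : Unit → ℝ ↦ u ()) (ψ := id) (by fun_prop) measurable_id
  have hRm : AEMeasurable (fun ω i ↦ R i ω) P := hWR.snd.aemeasurable
  have hmap := (indepFun_iff_map_prod_eq_prod_map_map hWg.aemeasurable hRm).1 hind
  have hWlaw : P.map W = gaussianReal 0 v.toNNReal := by
    rw [hWg.map_eq_gaussianReal, hW]
  have := hWR.snd.isGaussian_map.toIsProbabilityMeasure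
  rw [hWlaw] at hmap
  set ρ := P.map (fun ω i ↦ R i ω)
  set γ := gaussianReal 0 v.toNNReal
  have hZ (ω : Ω) : (fun i ↦ Z i ω) = (fun i ↦ R i ω) + W ω • (v⁻¹ • c) := by
    ext i
    simp [hR]
    ring
  have hpair : AEMeasurable (fun ω ↦ (W ω, fun i ↦ R i ω)) P := hWg.aemeasurable.prodMk hRm
  have hline (r : ι → ℝ) (w : ℝ) :
      HasDerivAt (fun w : ℝ ↦ F (r + w • (v⁻¹ • c))) (v⁻¹ * G (r + w • (v⁻¹ • c))) w := by
    have h1 : HasDerivAt (fun s : ℝ ↦ v⁻¹ * (s - w)) v⁻¹ w := by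
      simpa using ((hasDerivAt_id w).sub_const w).const_mul v⁻¹
    have h2 := (hFG (r + w • (v⁻¹ • c))).comp_of_eq w h1 (by simp)
    rw [mul_comm]
    refine h2.congr_of_eventuallyEq (Eventually.of_forall fun s ↦ ?_)
    simp only [Function.comp_apply]
    congr 1
    ext i
    simp
    ring
  have hF' : Continuous fun p : ℝ × (ι → ℝ) ↦ F (p.2 + p.1 • (v⁻¹ • c)) := by fun_prop
  have hG' : Continuous fun p : ℝ × (ι → ℝ) ↦ G (p.2 + p.1 • (v⁻¹ • c)) := by fun_prop
  have hγ : Integrable (fun w : ℝ ↦ w) γ :=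
    (memLp_id_gaussianReal (μ := 0) (v := v.toNNReal) 1).integrable le_rfl
  have hI1 : Integrable (fun p : ℝ × (ι → ℝ) ↦ p.1 * F (p.2 + p.1 • (v⁻¹ • c))) (γ.prod ρ) :=
    (hγ.comp_fst ρ).mul_bdd (c := M) hF'.aestronglyMeasurable (ae_of_all _ fun p ↦ hFM _)
  have hI2 : Integrable (fun p : ℝ × (ι → ℝ) ↦ G (p.2 + p.1 • (v⁻¹ • c))) (γ.prod ρ) :=
    Integrable.of_bound hG'.aestronglyMeasurable M (ae_of_all _ fun p ↦ hGM _)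
  calc ∫ ω, W ω * F (fun i ↦ Z i ω) ∂P
      = ∫ p, p.1 * F (p.2 + p.1 • (v⁻¹ • c)) ∂(γ.prod ρ) := by
        rw [← hmap, integral_map hpair (by fun_prop)]
        simp only [hZ]
    _ = ∫ r, ∫ w, w * F (r + w • (v⁻¹ • c)) ∂γ ∂ρ := integral_prod_symm _ hI1
    _ = ∫ r, ∫ w, G (r + w • (v⁻¹ • c)) ∂γ ∂ρ := by
        congr 1 with r
        rw [integral_id_mul_gaussianReal (M := max M (v⁻¹ * M)) (hline r) (by fun_prop)
          (fun w ↦ (hFM _).trans (le_max_left _ _)), integral_const_mul,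
          Real.coe_toNNReal _ hvpos.le, mul_inv_cancel_left₀ hv]
        intro w
        rw [abs_mul, abs_of_pos (inv_pos.2 hvpos)]
        exact (mul_le_mul_of_nonneg_left (hGM _) (inv_pos.2 hvpos).le).trans (le_max_right _ _)
    _ = ∫ p, G (p.2 + p.1 • (v⁻¹ • c)) ∂(γ.prod ρ) := (integral_prod_symm _ hI2).symm
    _ = ∫ ω, G (fun i ↦ Z i ω) ∂P := by
        rw [← hmap, integral_map hpair (by fun_prop)]
        simp only [hZ]

section Softmax

variable {ι : Type*} [Fintype ι]

/-- The log-sum-exp function. -/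
def logSumExp (x : ι → ℝ) : ℝ := log (∑ i, exp (x i))

/-- The softmax weights. -/
def softmax (i : ι) (x : ι → ℝ) : ℝ := exp (x i) / ∑ j, exp (x j)

theorem sum_exp_pos [Nonempty ι] (x : ι → ℝ) : 0 < ∑ i, exp (x i) :=
  Finset.sum_pos (fun _ _ ↦ exp_pos _) Finset.univ_nonempty

theorem softmax_nonneg (i : ι) (x : ι → ℝ) : 0 ≤ softmax i x := by
  unfold softmax
  positivity

theorem sum_softmax [Nonempty ι] (x : ι → ℝ) : ∑ i, softmax i x = 1 := by
  simp only [softmax, ← Finset.sum_div]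
  exact div_self (sum_exp_pos x).ne'

theorem softmax_le_one [Nonempty ι] (i : ι) (x : ι → ℝ) : softmax i x ≤ 1 := by
  rw [← sum_softmax x]
  exact Finset.single_le_sum (fun j _ ↦ softmax_nonneg j x) (Finset.mem_univ i)

theorem abs_softmax_le_one [Nonempty ι] (i : ι) (x : ι → ℝ) : |softmax i x| ≤ 1 := by
  rw [abs_of_nonneg (softmax_nonneg i x)]
  exact softmax_le_one i x

@[fun_prop]
theorem continuous_softmax [Nonempty ι] (i : ι) : Continuous (softmax i : (ι → ℝ) → ℝ) := by
  unfold softmax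
  exact Continuous.div (by fun_prop) (by fun_prop) fun x ↦ (sum_exp_pos x).ne'

@[fun_prop]
theorem continuous_logSumExp [Nonempty ι] : Continuous (logSumExp : (ι → ℝ) → ℝ) := by
  unfold logSumExp
  exact Continuous.log (by fun_prop) fun x ↦ (sum_exp_pos x).ne'

theorem hasDerivAt_logSumExp [Nonempty ι] {z : ℝ → ι → ℝ} {z' : ι → ℝ} {t : ℝ}
    (hz : ∀ i, HasDerivAt (fun s ↦ z s i) (z' i) t) :
    HasDerivAt (fun s ↦ logSumExp (z s)) (∑ i, z' i * softmax i (z t)) t := by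
  have h := (HasDerivAt.fun_sum (u := Finset.univ) fun i _ ↦ (hz i).exp).log
    (sum_exp_pos (z t)).ne'
  refine h.congr_deriv ?_
  simp only [softmax, Finset.sum_div]
  exact Finset.sum_congr rfl fun i _ ↦ by ring

theorem hasDerivAt_softmax [Nonempty ι] {z : ℝ → ι → ℝ} {z' : ι → ℝ} {t : ℝ} (i : ι)
    (hz : ∀ i, HasDerivAt (fun s ↦ z s i) (z' i) t) :
    HasDerivAt (fun s ↦ softmax i (z s))
      (softmax i (z t) * (z' i - ∑ j, z' j * softmax j (z t))) t := by
  have h0 := (sum_exp_pos (z t)).ne'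
  have h := (hz i).exp.fun_div (HasDerivAt.fun_sum (u := Finset.univ) fun i _ ↦ (hz i).exp) h0
  refine h.congr_deriv ?_
  have : ∑ j, z' j * softmax j (z t) = (∑ j, exp (z t j) * z' j) / ∑ j, exp (z t j) := by
    simp only [softmax, Finset.sum_div]
    exact Finset.sum_congr rfl fun i _ ↦ by ring
  rw [this, softmax]
  field_simp

theorem le_logSumExp [Nonempty ι] (i : ι) (x : ι → ℝ) : x i ≤ logSumExp x := by
  rw [logSumExp, le_log_iff_exp_le (sum_exp_pos x)]
  exact Finset.single_le_sum (fun j _ ↦ (exp_pos (x j)).le) (Finset.mem_univ i)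

theorem logSumExp_le [Nonempty ι] {x : ι → ℝ} {m : ℝ} (h : ∀ i, x i ≤ m) :
    logSumExp x ≤ m + log (Fintype.card ι) := by
  have hc : (0 : ℝ) < Fintype.card ι := by exact_mod_cast Fintype.card_pos
  rw [logSumExp, log_le_iff_le_exp (sum_exp_pos x), exp_add, exp_log hc]
  calc ∑ i, exp (x i) ≤ ∑ _i : ι, exp m := Finset.sum_le_sum fun i _ ↦ exp_le_exp.2 (h i)
    _ = exp m * Fintype.card ι := by simp [mul_comm]

theorem abs_logSumExp_le [Nonempty ι] (x : ι → ℝ) :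
    |logSumExp x| ≤ ∑ i, |x i| + log (Fintype.card ι) := by
  have hle (i : ι) : |x i| ≤ ∑ i, |x i| :=
    Finset.single_le_sum (fun j _ ↦ abs_nonneg (x j)) (Finset.mem_univ i)
  have hlog : 0 ≤ log (Fintype.card ι) := log_natCast_nonneg _
  obtain ⟨i⟩ := ‹Nonempty ι›
  rw [abs_le]
  refine ⟨?_, logSumExp_le fun i ↦ (le_abs_self _).trans (hle i)⟩
  have : x i ≤ logSumExp x := by
    have : Nonempty ι := ⟨i⟩
    exact le_logSumExp i x
  linarith [neg_abs_le (x i), hle i]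

/-- The quadratic form of the Hessian of log-sum-exp, paired with a matrix `D`. -/
theorem sum_softmax_mul_sub [Nonempty ι] (x : ι → ℝ) (D : ι → ι → ℝ) :
    ∑ i, softmax i x * (D i i - ∑ j, D i j * softmax j x) =
      (∑ i, ∑ j, softmax i x * softmax j x * (D i i + D j j - 2 * D i j)) / 2 := by
  have h1 : ∑ i, ∑ j, softmax i x * softmax j x * D i i = ∑ i, softmax i x * D i i := by
    refine Finset.sum_congr rfl fun i _ ↦ ?_
    rw [← Finset.sum_mul, ← Finset.mul_sum, sum_softmax, mul_one]
  have h2 : ∑ i, ∑ j, softmax i x * softmax j x * D j j = ∑ i, softmax i x * D i i := by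
    rw [Finset.sum_comm, ← h1]
    exact Finset.sum_congr rfl fun i _ ↦ Finset.sum_congr rfl fun j _ ↦ by ring
  have h3 : ∑ i, softmax i x * ∑ j, D i j * softmax j x =
      ∑ i, ∑ j, softmax i x * softmax j x * D i j := by
    simp only [Finset.mul_sum]
    exact Finset.sum_congr rfl fun i _ ↦ Finset.sum_congr rfl fun j _ ↦ by ring
  have h4 : ∑ i, ∑ j, softmax i x * softmax j x * (2 * D i j) =
      2 * ∑ i, ∑ j, softmax i x * softmax j x * D i j := by
    simp only [Finset.mul_sum]
    exact Finset.sum_congr rfl fun i _ ↦ Finset.sum_congr rfl fun j _ ↦ by ring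
  simp only [mul_sub, mul_add, Finset.sum_sub_distrib, Finset.sum_add_distrib] at *
  rw [h1, h2, h3, h4]
  ring

end Softmax

section Comparison

variable {Ω : Type*} [MeasurableSpace Ω] {P : Measure Ω} {ι : Type*} [Fintype ι] [Nonempty ι]
  {X Y : ι → Ω → ℝ}

theorem ProbabilityTheory.HasGaussianLaw.integrable_logSumExp
    (h : HasGaussianLaw (fun ω i ↦ X i ω) P) :
    Integrable (fun ω ↦ logSumExp fun i ↦ X i ω) P := by
  have := h.isProbabilityMeasure
  have hm := h.aemeasurable
  refine Integrable.mono' (g := fun ω ↦ ∑ i, |X i ω| + log (Fintype.card ι))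
    ((integrable_finsetSum _ fun i _ ↦ (h.eval i).integrable.abs).add (integrable_const _))
    (continuous_logSumExp.measurable.comp_aemeasurable hm).aestronglyMeasurable
    (ae_of_all _ fun ω ↦ abs_logSumExp_le _)

theorem integral_sum_mul_softmax_nonneg
    (h : HasGaussianLaw (fun ω ↦ (fun i ↦ X i ω, fun i ↦ Y i ω)) P)
    (hcov : ∀ i j, cov[X i, Y j; P] = 0)
    (hX : ∀ i, ∫ ω, X i ω ∂P = 0) (hY : ∀ i, ∫ ω, Y i ω ∂P = 0)
    (hvar : ∀ i j, Var[fun ω ↦ Y i ω - Y j ω; P] ≤ Var[fun ω ↦ X i ω - X j ω; P])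
    {a b : ℝ} (ha : 0 ≤ a) (hb : 0 ≤ b) :
    0 ≤ ∫ ω, ∑ i, (a * X i ω - b * Y i ω) * softmax i (fun j ↦ b * X j ω + a * Y j ω) ∂P := by
  have := h.isProbabilityMeasure
  have hX2 (i : ι) : MemLp (X i) 2 P := (h.fst.eval i).memLp_two
  have hY2 (i : ι) : MemLp (Y i) 2 P := (h.snd.eval i).memLp_two
  have hXi (i : ι) : Integrable (X i) P := (h.fst.eval i).integrable
  have hYi (i : ι) : Integrable (Y i) P := (h.snd.eval i).integrable
  set D : ι → ι → ℝ := fun i j ↦ cov[X i, X j; P] - cov[Y i, Y j; P] with hD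
  have hc (i j : ι) : cov[fun ω ↦ a * X i ω - b * Y i ω, fun ω ↦ b * X j ω + a * Y j ω; P]
      = a * b * D i j := by
    have e1 : (fun ω ↦ b * X j ω + a * Y j ω) = (fun ω ↦ b * X j ω) + fun ω ↦ a * Y j ω := rfl
    have hcov' : cov[Y i, X j; P] = 0 := by rw [covariance_comm, hcov]
    rw [e1, covariance_fun_sub_left ((hX2 i).const_mul a) ((hY2 i).const_mul b)
      (((hX2 j).const_mul b).add ((hY2 j).const_mul a)),
      covariance_add_right ((hX2 i).const_mul a) ((hX2 j).const_mul b) ((hY2 j).const_mul a),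
      covariance_add_right ((hY2 i).const_mul b) ((hX2 j).const_mul b) ((hY2 j).const_mul a)]
    simp only [covariance_const_mul_left, covariance_const_mul_right, hcov, hcov', hD]
    ring
  have hWZ (i : ι) : HasGaussianLaw
      (fun ω ↦ (a * X i ω - b * Y i ω, fun j ↦ b * X j ω + a * Y j ω)) P := by
    let L : ((ι → ℝ) × (ι → ℝ)) →L[ℝ] (ℝ × (ι → ℝ)) :=
      (a • (ContinuousLinearMap.proj i).comp (ContinuousLinearMap.fst ℝ (ι → ℝ) (ι → ℝ)) -
        b • (ContinuousLinearMap.proj i).comp (ContinuousLinearMap.snd ℝ (ι → ℝ) (ι → ℝ))).prod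
      (b • ContinuousLinearMap.fst ℝ (ι → ℝ) (ι → ℝ) +
        a • ContinuousLinearMap.snd ℝ (ι → ℝ) (ι → ℝ))
    exact h.map_fun L
  have hZm : AEMeasurable (fun ω ↦ (fun j ↦ b * X j ω + a * Y j ω : ι → ℝ)) P :=
    (hWZ (Classical.arbitrary ι)).snd.aemeasurable
  set G : ι → (ι → ℝ) → ℝ := fun i z ↦
    softmax i z * (a * b * D i i - ∑ j, (a * b * D i j) * softmax j z) with hG
  have hGc (i : ι) : Continuous (G i) := by fun_prop
  have hGM (i : ι) (z : ι → ℝ) : |G i z| ≤ 1 + |a * b * D i i| + ∑ j, |a * b * D i j| := by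
    rw [hG, abs_mul]
    have h1 : |∑ j, (a * b * D i j) * softmax j z| ≤ ∑ j, |a * b * D i j| := by
      refine (Finset.abs_sum_le_sum_abs _ _).trans (Finset.sum_le_sum fun j _ ↦ ?_)
      rw [abs_mul]
      exact mul_le_of_le_one_right (abs_nonneg _) (abs_softmax_le_one _ _)
    have h2 := abs_sub (a * b * D i i) (∑ j, (a * b * D i j) * softmax j z)
    have h3 := mul_le_of_le_one_left
      (abs_nonneg (a * b * D i i - ∑ j, (a * b * D i j) * softmax j z)) (abs_softmax_le_one i z)
    linarith
  have hIBP (i : ι) :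
      ∫ ω, (a * X i ω - b * Y i ω) * softmax i (fun j ↦ b * X j ω + a * Y j ω) ∂P
        = ∫ ω, G i (fun j ↦ b * X j ω + a * Y j ω) ∂P := by
    refine HasGaussianLaw.integral_mul_comp (hWZ i) ?_ (continuous_softmax i) (hGc i)
      (M := 1 + |a * b * D i i| + ∑ j, |a * b * D i j|) (fun z ↦ ?_) (hGM i) fun z ↦ ?_
    · rw [integral_sub ((hXi i).const_mul _) ((hYi i).const_mul _), integral_const_mul,
        integral_const_mul, hX, hY]
      simp
    · have : 0 ≤ ∑ j, |a * b * D i j| := Finset.sum_nonneg fun _ _ ↦ abs_nonneg _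
      linarith [abs_softmax_le_one i z, abs_nonneg (a * b * D i i)]
    · simp only [hc]
      have hz (j : ι) : HasDerivAt
          (fun t : ℝ ↦ (z + t • fun j ↦ a * b * D i j) j) (a * b * D i j) 0 := by
        simpa using ((hasDerivAt_id (0 : ℝ)).mul_const (a * b * D i j)).const_add (z j)
      simpa [hG] using hasDerivAt_softmax i hz
  have hint (i : ι) : Integrable
      (fun ω ↦ (a * X i ω - b * Y i ω) * softmax i (fun j ↦ b * X j ω + a * Y j ω)) P :=
    (((hXi i).const_mul _).sub ((hYi i).const_mul _)).mul_bdd (c := 1)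
      ((continuous_softmax i).measurable.comp_aemeasurable hZm).aestronglyMeasurable
      (ae_of_all _ fun ω ↦ abs_softmax_le_one _ _)
  have hGint (i : ι) : Integrable (fun ω ↦ G i (fun j ↦ b * X j ω + a * Y j ω)) P :=
    Integrable.of_bound
      ((hGc i).measurable.comp_aemeasurable hZm).aestronglyMeasurable
      (1 + |a * b * D i i| + ∑ j, |a * b * D i j|) (ae_of_all _ fun ω ↦ hGM _ _)
  rw [integral_finsetSum _ fun i _ ↦ hint i]
  simp only [hIBP]
  rw [← integral_finsetSum _ fun i _ ↦ hGint i]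
  refine integral_nonneg fun ω ↦ ?_
  simp only [hG, Pi.zero_apply]
  rw [sum_softmax_mul_sub _ fun i j ↦ a * b * D i j]
  refine div_nonneg (Finset.sum_nonneg fun i _ ↦ Finset.sum_nonneg fun j _ ↦ ?_) zero_le_two
  refine mul_nonneg (mul_nonneg (softmax_nonneg _ _) (softmax_nonneg _ _)) ?_
  have hv := hvar i j
  rw [variance_fun_sub (hX2 i) (hX2 j), variance_fun_sub (hY2 i) (hY2 j)] at hv
  have hDij : 0 ≤ D i i + D j j - 2 * D i j := by
    simp only [hD, covariance_self (hX2 _).aemeasurable, covariance_self (hY2 _).aemeasurable]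
    linarith
  have := mul_nonneg (mul_nonneg ha hb) hDij
  linarith

theorem integral_logSumExp_le
    (h : HasGaussianLaw (fun ω ↦ (fun i ↦ X i ω, fun i ↦ Y i ω)) P)
    (hcov : ∀ i j, cov[X i, Y j; P] = 0)
    (hX : ∀ i, ∫ ω, X i ω ∂P = 0) (hY : ∀ i, ∫ ω, Y i ω ∂P = 0)
    (hvar : ∀ i j, Var[fun ω ↦ Y i ω - Y j ω; P] ≤ Var[fun ω ↦ X i ω - X j ω; P]) :
    ∫ ω, logSumExp (fun i ↦ Y i ω) ∂P ≤ ∫ ω, logSumExp (fun i ↦ X i ω) ∂P := by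
  have := h.isProbabilityMeasure
  have hXi (i : ι) : Integrable (X i) P := (h.fst.eval i).integrable
  have hYi (i : ι) : Integrable (Y i) P := (h.snd.eval i).integrable
  have hZ (a b : ℝ) : HasGaussianLaw (fun ω ↦ (fun j ↦ b * X j ω + a * Y j ω : ι → ℝ)) P :=
    h.map_fun (b • ContinuousLinearMap.fst ℝ (ι → ℝ) (ι → ℝ) +
        a • ContinuousLinearMap.snd ℝ (ι → ℝ) (ι → ℝ))
  set φ : ℝ → ℝ := fun θ ↦ ∫ ω, logSumExp (fun i ↦ sin θ * X i ω + cos θ * Y i ω) ∂P with hφ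
  have hderiv (θ : ℝ) : HasDerivAt φ (∫ ω, ∑ i, (cos θ * X i ω - sin θ * Y i ω) *
      softmax i (fun j ↦ sin θ * X j ω + cos θ * Y j ω) ∂P) θ := by
    refine (hasDerivAt_integral_of_dominated_loc_of_deriv_le (s := univ)
      (bound := fun ω ↦ ∑ i, (|X i ω| + |Y i ω|))
      (F' := fun θ ω ↦ ∑ i, (cos θ * X i ω - sin θ * Y i ω) *
        softmax i (fun j ↦ sin θ * X j ω + cos θ * Y j ω)) univ_mem
      (Eventually.of_forall fun θ ↦ ?_) ?_ ?_ ?_ ?_ ?_).2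
    · exact (hZ _ _).integrable_logSumExp.aestronglyMeasurable
    · exact (hZ _ _).integrable_logSumExp
    · refine (Finset.aemeasurable_fun_sum _ fun i _ ↦ AEMeasurable.mul ?_ ?_).aestronglyMeasurable
      · exact ((hXi i).aemeasurable.const_mul _).sub ((hYi i).aemeasurable.const_mul _)
      · exact (continuous_softmax i).measurable.comp_aemeasurable (hZ _ _).aemeasurable
    · refine ae_of_all _ fun ω θ _ ↦ (Finset.abs_sum_le_sum_abs _ _).trans
        (Finset.sum_le_sum fun i _ ↦ ?_)
      rw [abs_mul]
      refine (mul_le_of_le_one_right (abs_nonneg _) (abs_softmax_le_one _ _)).trans ?_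
      refine (abs_sub _ _).trans (add_le_add ?_ ?_)
      · rw [abs_mul]
        exact mul_le_of_le_one_left (abs_nonneg _) (abs_cos_le_one _)
      · rw [abs_mul]
        exact mul_le_of_le_one_left (abs_nonneg _) (abs_sin_le_one _)
    · exact integrable_finsetSum _ fun i _ ↦ (hXi i).abs.add (hYi i).abs
    · refine ae_of_all _ fun ω θ _ ↦ hasDerivAt_logSumExp fun i ↦ ?_
      refine (((hasDerivAt_sin θ).mul_const (X i ω)).add
        ((hasDerivAt_cos θ).mul_const (Y i ω))).congr_deriv ?_
      ring
  have hmono : MonotoneOn φ (Icc 0 (π / 2)) := by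
    refine monotoneOn_of_deriv_nonneg (convex_Icc _ _)
      (fun θ _ ↦ (hderiv θ).continuousAt.continuousWithinAt)
      (fun θ _ ↦ (hderiv θ).differentiableAt.differentiableWithinAt) fun θ hθ ↦ ?_
    rw [interior_Icc] at hθ
    rw [(hderiv θ).deriv]
    exact integral_sum_mul_softmax_nonneg h hcov hX hY hvar
      (cos_nonneg_of_mem_Icc ⟨by linarith [hθ.1, pi_pos], hθ.2.le⟩)
      (sin_nonneg_of_nonneg_of_le_pi hθ.1.le (by linarith [hθ.2, pi_pos]))
  have := hmono (left_mem_Icc.2 (by positivity)) (right_mem_Icc.2 (by positivity)) (by positivity)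
  simpa [hφ] using this

end Comparison

section SudakovFernique

variable {Ω Ω' : Type*} [MeasurableSpace Ω] [MeasurableSpace Ω'] {P : Measure Ω} {P' : Measure Ω'}
  {ι : Type*} [Fintype ι] [Nonempty ι]

theorem abs_iSup_le_sum_abs (x : ι → ℝ) : |⨆ i, x i| ≤ ∑ i, |x i| := by
  obtain ⟨i, hi⟩ := exists_eq_ciSup_of_finite (f := x)
  rw [← hi]
  exact Finset.single_le_sum (f := fun i ↦ |x i|) (fun _ _ ↦ abs_nonneg _) (Finset.mem_univ i)

theorem integrable_iSup_of_finite {X : ι → Ω → ℝ} (hX : ∀ i, Integrable (X i) P) :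
    Integrable (fun ω ↦ ⨆ i, X i ω) P :=
  Integrable.mono' (integrable_finsetSum _ fun i _ ↦ (hX i).abs)
    (AEMeasurable.iSup fun i ↦ (hX i).aemeasurable).aestronglyMeasurable
    (ae_of_all _ fun _ ↦ abs_iSup_le_sum_abs _)

theorem integral_iSup_le_of_uncorrelated {X Y : ι → Ω → ℝ}
    (h : HasGaussianLaw (fun ω ↦ (fun i ↦ X i ω, fun i ↦ Y i ω)) P)
    (hcov : ∀ i j, cov[X i, Y j; P] = 0)
    (hX : ∀ i, ∫ ω, X i ω ∂P = 0) (hY : ∀ i, ∫ ω, Y i ω ∂P = 0)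
    (hvar : ∀ i j, Var[fun ω ↦ Y i ω - Y j ω; P] ≤ Var[fun ω ↦ X i ω - X j ω; P]) :
    ∫ ω, ⨆ i, Y i ω ∂P ≤ ∫ ω, ⨆ i, X i ω ∂P := by
  have := h.isProbabilityMeasure
  have hXi := integrable_iSup_of_finite fun i ↦ (h.fst.eval i).integrable
  have hYi := integrable_iSup_of_finite fun i ↦ (h.snd.eval i).integrable
  have key (β : ℝ) (hβ : 0 < β) :
      β * ∫ ω, ⨆ i, Y i ω ∂P ≤ β * ∫ ω, ⨆ i, X i ω ∂P + log (Fintype.card ι) := by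
    have hβg : HasGaussianLaw (fun ω ↦ (fun i ↦ β * X i ω, fun i ↦ β * Y i ω)) P :=
      h.map_fun (β • ContinuousLinearMap.id ℝ ((ι → ℝ) × (ι → ℝ)))
    have h1 := integral_logSumExp_le hβg
      (fun i j ↦ by rw [covariance_const_mul_left, covariance_const_mul_right, hcov]; simp)
      (fun i ↦ by rw [integral_const_mul, hX, mul_zero])
      (fun i ↦ by rw [integral_const_mul, hY, mul_zero])
      (fun i j ↦ by
        simp only [← mul_sub, variance_const_mul]
        exact mul_le_mul_of_nonneg_left (hvar i j) (sq_nonneg β))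
    calc β * ∫ ω, ⨆ i, Y i ω ∂P = ∫ ω, β * ⨆ i, Y i ω ∂P := (integral_const_mul _ _).symm
      _ ≤ ∫ ω, logSumExp (fun i ↦ β * Y i ω) ∂P := by
        refine integral_mono (hYi.const_mul β) hβg.snd.integrable_logSumExp fun ω ↦ ?_
        obtain ⟨i, hi⟩ := exists_eq_ciSup_of_finite (f := fun i ↦ Y i ω)
        rw [← hi]
        exact le_logSumExp i fun i ↦ β * Y i ω
      _ ≤ ∫ ω, logSumExp (fun i ↦ β * X i ω) ∂P := h1
      _ ≤ ∫ ω, (β * (⨆ i, X i ω) + log (Fintype.card ι)) ∂P := by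
        refine integral_mono hβg.fst.integrable_logSumExp
          ((hXi.const_mul β).add (integrable_const _)) fun ω ↦ logSumExp_le fun i ↦ ?_
        exact mul_le_mul_of_nonneg_left (le_ciSup (Finite.bddAbove_range fun i ↦ X i ω) i) hβ.le
      _ = _ := by
        rw [integral_add (hXi.const_mul β) (integrable_const _), integral_const_mul]
        simp
  refine le_of_forall_pos_le_add fun ε hε ↦ ?_
  have hlog : 0 ≤ log (Fintype.card ι) := log_natCast_nonneg _
  have hβ : 0 < (log (Fintype.card ι) + 1) / ε := by positivity
  have := key _ hβ
  rw [← sub_le_iff_le_add', ← mul_sub] at this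
  have h2 : (log (Fintype.card ι) + 1) / ε *
      (∫ ω, ⨆ i, Y i ω ∂P - ∫ ω, ⨆ i, X i ω ∂P) ≤ (log (Fintype.card ι) + 1) / ε * ε := by
    rw [div_mul_cancel₀ _ hε.ne']
    linarith
  linarith [le_of_mul_le_mul_left h2 hβ]

/-- The **Sudakov-Fernique inequality**: for two finite centered Gaussian families, larger
increments yield a larger expected maximum. -/
theorem integral_iSup_le_of_variance_sub_le {X : ι → Ω → ℝ} {Y : ι → Ω' → ℝ}
    (hXg : HasGaussianLaw (fun ω i ↦ X i ω) P) (hYg : HasGaussianLaw (fun ω i ↦ Y i ω) P')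
    (hX : ∀ i, ∫ ω, X i ω ∂P = 0) (hY : ∀ i, ∫ ω, Y i ω ∂P' = 0)
    (hvar : ∀ i j, Var[fun ω ↦ Y i ω - Y j ω; P'] ≤ Var[fun ω ↦ X i ω - X j ω; P]) :
    ∫ ω, ⨆ i, Y i ω ∂P' ≤ ∫ ω, ⨆ i, X i ω ∂P := by
  have := hXg.isProbabilityMeasure
  have := hYg.isProbabilityMeasure
  have hX1 : HasGaussianLaw (fun p : Ω × Ω' ↦ fun i ↦ X i p.1) (P.prod P') :=
    ⟨by
      rw [show (fun p : Ω × Ω' ↦ fun i ↦ X i p.1) = (fun ω i ↦ X i ω) ∘ Prod.fst from rfl,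
        ← AEMeasurable.map_map_of_aemeasurable (by simpa using hXg.aemeasurable) (by fun_prop)]
      simpa using hXg.isGaussian_map⟩
  have hY1 : HasGaussianLaw (fun p : Ω × Ω' ↦ fun i ↦ Y i p.2) (P.prod P') :=
    ⟨by
      rw [show (fun p : Ω × Ω' ↦ fun i ↦ Y i p.2) = (fun ω i ↦ Y i ω) ∘ Prod.snd from rfl,
        ← AEMeasurable.map_map_of_aemeasurable (by simpa using hYg.aemeasurable) (by fun_prop)]
      simpa using hYg.isGaussian_map⟩
  have hXm (i : ι) := (hXg.eval i).aemeasurable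
  have hYm (i : ι) := (hYg.eval i).aemeasurable
  have := integral_iSup_le_of_uncorrelated (X := fun i (p : Ω × Ω') ↦ X i p.1)
    (Y := fun i (p : Ω × Ω') ↦ Y i p.2)
    ((indepFun_prod₀ hXg.aemeasurable hYg.aemeasurable).hasGaussianLaw hX1 hY1)
    (fun i j ↦ covariance_fst_snd_prod (hXg.eval i).memLp_two (hYg.eval j).memLp_two)
    (fun i ↦ by rw [integral_fun_fst (X i)]; simp [hX])
    (fun i ↦ by rw [integral_fun_snd (Y i)]; simp [hY])
    (fun i j ↦ by
      rw [measurePreserving_fst.variance_fun_comp (f := fun ω ↦ X i ω - X j ω)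
          ((hXm i).sub (hXm j)),
        measurePreserving_snd.variance_fun_comp (f := fun ω ↦ Y i ω - Y j ω)
          ((hYm i).sub (hYm j))]
      exact hvar i j)
  rw [integral_fun_fst (fun ω ↦ ⨆ i, X i ω), integral_fun_snd (fun ω ↦ ⨆ i, Y i ω)] at this
  simpa using this

/-- The expected maximum of a centered Gaussian family is at least half its expected range. -/
theorem integral_le_two_mul_integral_iSup {X : ι → Ω → ℝ}
    (hXg : HasGaussianLaw (fun ω i ↦ X i ω) P) (hX : ∀ i, ∫ ω, X i ω ∂P = 0)
    {f : Ω → ℝ} (hf : Integrable f P) (hle : ∀ ω, f ω ≤ (⨆ i, X i ω) + ⨆ i, -X i ω) :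
    ∫ ω, f ω ∂P ≤ 2 * ∫ ω, ⨆ i, X i ω ∂P := by
  have hXi (i : ι) : Integrable (X i) P := (hXg.eval i).integrable
  have hneg : HasGaussianLaw (fun ω i ↦ -X i ω) P :=
    hXg.map_fun (-ContinuousLinearMap.id ℝ (ι → ℝ))
  have h1 := integral_iSup_le_of_variance_sub_le hXg hneg hX
    (fun i ↦ by rw [integral_neg, hX, neg_zero]) (fun i j ↦ by
      rw [← variance_fun_neg]
      refine le_of_eq (congrArg (fun g ↦ Var[g; P]) ?_)
      ext ω
      ring)
  have i1 := integrable_iSup_of_finite hXi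
  have i2 := integrable_iSup_of_finite fun i ↦ (hXi i).neg
  calc ∫ ω, f ω ∂P ≤ ∫ ω, ((⨆ i, X i ω) + ⨆ i, -X i ω) ∂P := integral_mono hf (i1.add i2) hle
    _ = ∫ ω, ⨆ i, X i ω ∂P + ∫ ω, ⨆ i, -X i ω ∂P := integral_add i1 i2
    _ ≤ _ := by linarith

end SudakovFernique

section StandardGaussian

variable {Ω : Type*} [MeasurableSpace Ω] {P : Measure Ω} {ι κ : Type*} [Fintype ι] [Fintype κ]

theorem variance_fun_zero : Var[fun _ ↦ (0 : ℝ); P] = 0 := variance_zero P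

/-- The law of a family of independent standard Gaussian variables. -/
def gaussianPi (ι : Type*) [Fintype ι] : Measure (ι → ℝ) := Measure.pi fun _ ↦ gaussianReal 0 1

/-- The expected maximum of independent standard Gaussian variables. -/
def gaussianMax (ι : Type*) [Fintype ι] : ℝ := ∫ x, ⨆ i, x i ∂gaussianPi ι

instance : IsProbabilityMeasure (gaussianPi ι) := by
  unfold gaussianPi; infer_instance

theorem map_eval_gaussianPi (i : ι) :
    (gaussianPi ι).map (fun x ↦ x i) = gaussianReal 0 1 :=
  (measurePreserving_eval (fun _ : ι ↦ gaussianReal 0 1) i).map_eq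

theorem hasGaussianLaw_gaussianPi : HasGaussianLaw (fun x : ι → ℝ ↦ x) (gaussianPi ι) := by
  refine iIndepFun.hasGaussianLaw (X := fun i (x : ι → ℝ) ↦ x i) (fun i ↦ ⟨?_⟩)
    (iIndepFun_pi (X := fun _ x ↦ x) fun _ ↦ aemeasurable_id)
  rw [map_eval_gaussianPi]
  infer_instance

theorem hasGaussianLaw_eval_gaussianPi (i : ι) :
    HasGaussianLaw (fun x : ι → ℝ ↦ x i) (gaussianPi ι) :=
  hasGaussianLaw_gaussianPi.eval i

theorem integral_eval_gaussianPi (i : ι) : ∫ x : ι → ℝ, x i ∂gaussianPi ι = 0 := by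
  have := integral_map (μ := gaussianPi ι) (φ := fun x ↦ x i) (f := fun x : ℝ ↦ x)
    (measurable_pi_apply i).aemeasurable (by fun_prop)
  rw [← this, map_eval_gaussianPi, integral_id_gaussianReal]

theorem variance_eval_gaussianPi (i : ι) : Var[fun x : ι → ℝ ↦ x i; gaussianPi ι] = 1 := by
  rw [← variance_id_map (measurable_pi_apply i).aemeasurable, map_eval_gaussianPi,
    variance_id_gaussianReal]
  simp

theorem covariance_eval_gaussianPi {i j : ι} (hij : i ≠ j) :
    cov[fun x : ι → ℝ ↦ x i, fun x : ι → ℝ ↦ x j; gaussianPi ι] = 0 :=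
  ((iIndepFun_pi (μ := fun _ : ι ↦ gaussianReal 0 1) (X := fun _ x ↦ x)
    fun _ ↦ aemeasurable_id).indepFun hij).covariance_eq_zero
    (hasGaussianLaw_eval_gaussianPi i).memLp_two (hasGaussianLaw_eval_gaussianPi j).memLp_two

theorem variance_eval_sub_eval_gaussianPi {i j : ι} (hij : i ≠ j) :
    Var[fun x : ι → ℝ ↦ x i - x j; gaussianPi ι] = 2 := by
  rw [variance_fun_sub (hasGaussianLaw_eval_gaussianPi i).memLp_two
    (hasGaussianLaw_eval_gaussianPi j).memLp_two, variance_eval_gaussianPi,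
    variance_eval_gaussianPi, covariance_eval_gaussianPi hij]
  norm_num

theorem variance_eval_sub_eval_gaussianPi_le (i j : ι) :
    Var[fun x : ι → ℝ ↦ x i - x j; gaussianPi ι] ≤ 2 := by
  rcases eq_or_ne i j with rfl | hij
  · simp [variance_fun_zero]
  · exact (variance_eval_sub_eval_gaussianPi hij).le

theorem mul_gaussianMax_le [Nonempty ι] [Nonempty κ] {X : ι → Ω → ℝ}
    (hXg : HasGaussianLaw (fun ω i ↦ X i ω) P) (hX : ∀ i, ∫ ω, X i ω ∂P = 0) {a : ℝ}
    (ha : 0 ≤ a) (hvar : ∀ i j, i ≠ j → 2 * a ^ 2 ≤ Var[fun ω ↦ X i ω - X j ω; P])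
    (e : κ ↪ ι) : a * gaussianMax κ ≤ ∫ ω, ⨆ i, X i ω ∂P := by
  have hXe : HasGaussianLaw (fun ω k ↦ X (e k) ω) P :=
    hXg.map_fun (ContinuousLinearMap.pi fun k ↦ ContinuousLinearMap.proj (R := ℝ) (e k))
  have haz : HasGaussianLaw (fun (x : κ → ℝ) k ↦ a * x k) (gaussianPi κ) :=
    hasGaussianLaw_gaussianPi.map_fun (a • ContinuousLinearMap.id ℝ (κ → ℝ))
  calc a * gaussianMax κ = ∫ x : κ → ℝ, ⨆ k, a * x k ∂gaussianPi κ := by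
        rw [gaussianMax, ← integral_const_mul]
        simp_rw [Real.mul_iSup_of_nonneg ha]
    _ ≤ ∫ ω, ⨆ k, X (e k) ω ∂P := by
        refine integral_iSup_le_of_variance_sub_le hXe haz (fun k ↦ hX _)
          (fun k ↦ by rw [integral_const_mul, integral_eval_gaussianPi, mul_zero]) fun k l ↦ ?_
        rcases eq_or_ne k l with rfl | hkl
        · simp [variance_fun_zero]
        · simp only [← mul_sub, variance_const_mul]
          rw [variance_eval_sub_eval_gaussianPi hkl]
          linarith [hvar _ _ (e.injective.ne hkl)]
    _ ≤ ∫ ω, ⨆ i, X i ω ∂P :=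
        integral_mono (integrable_iSup_of_finite fun k ↦ (hXe.eval k).integrable)
          (integrable_iSup_of_finite fun i ↦ (hXg.eval i).integrable) fun ω ↦
          ciSup_le fun k ↦ le_ciSup (Finite.bddAbove_range fun i ↦ X i ω) (e k)

theorem gaussianMax_mono [Nonempty ι] [Nonempty κ] (e : κ ↪ ι) :
    gaussianMax κ ≤ gaussianMax ι := by
  simpa [gaussianMax] using mul_gaussianMax_le hasGaussianLaw_gaussianPi integral_eval_gaussianPi
    zero_le_one (fun i j hij ↦ by rw [variance_eval_sub_eval_gaussianPi hij]; norm_num) e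

/-- Expected maxima of independent standard Gaussian families tensorize. -/
theorem sqrt_sq_add_sq_le_gaussianMax_prod [Nonempty ι] [Nonempty κ] {u w : ℝ} (hu : 0 < u)
    (hw : 0 < w) (hι : u ≤ gaussianMax ι) (hκ : w ≤ gaussianMax κ) :
    √(u ^ 2 + w ^ 2) ≤ gaussianMax (ι × κ) := by
  set r := √(u ^ 2 + w ^ 2) with hr
  have hr0 : 0 < r := by positivity
  have hr2 : r ^ 2 = u ^ 2 + w ^ 2 := sq_sqrt (by positivity)
  have hαβ : (u / r) ^ 2 + (w / r) ^ 2 = 1 := by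
    field_simp
    linarith
  have hα : 0 ≤ u / r := by positivity
  have hβ : 0 ≤ w / r := by positivity
  have hr : r = u / r * u + w / r * w := by
    field_simp
    linarith
  generalize u / r = α at hαβ hα hr
  generalize w / r = β at hαβ hβ hr
  have hY : HasGaussianLaw (fun (p : (ι → ℝ) × (κ → ℝ)) (ij : ι × κ) ↦
      α * p.1 ij.1 + β * p.2 ij.2) ((gaussianPi ι).prod (gaussianPi κ)) := by
    have h1 : HasGaussianLaw (fun p : (ι → ℝ) × (κ → ℝ) ↦ p)
        ((gaussianPi ι).prod (gaussianPi κ)) := by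
      have := (hasGaussianLaw_gaussianPi (ι := ι)).isGaussian_map
      have := (hasGaussianLaw_gaussianPi (ι := κ)).isGaussian_map
      simp only [Measure.map_id'] at *
      exact IsGaussian.hasGaussianLaw_id
    exact h1.map_fun (ContinuousLinearMap.pi fun ij : ι × κ ↦
      α • (ContinuousLinearMap.proj ij.1).comp (ContinuousLinearMap.fst ℝ (ι → ℝ) (κ → ℝ)) +
        β • (ContinuousLinearMap.proj ij.2).comp (ContinuousLinearMap.snd ℝ (ι → ℝ) (κ → ℝ)))
  have iι (i : ι) : Integrable (fun x : ι → ℝ ↦ x i) (gaussianPi ι) :=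
    (hasGaussianLaw_eval_gaussianPi i).integrable
  have iκ (i : κ) : Integrable (fun x : κ → ℝ ↦ x i) (gaussianPi κ) :=
    (hasGaussianLaw_eval_gaussianPi i).integrable
  have sι := ((integrable_iSup_of_finite iι).const_mul α).comp_fst (gaussianPi κ)
  have sκ := ((integrable_iSup_of_finite iκ).const_mul β).comp_snd (gaussianPi ι)
  calc r ≤ α * gaussianMax ι + β * gaussianMax κ := by
        rw [hr]
        gcongr
    _ = ∫ p : (ι → ℝ) × (κ → ℝ), (α * (⨆ i, p.1 i) + β * ⨆ j, p.2 j)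
          ∂(gaussianPi ι).prod (gaussianPi κ) := by
        rw [integral_add sι sκ, integral_fun_fst (fun x : ι → ℝ ↦ α * ⨆ i, x i),
          integral_fun_snd (fun x : κ → ℝ ↦ β * ⨆ i, x i), integral_const_mul, integral_const_mul]
        simp [gaussianMax]
    _ ≤ ∫ p : (ι → ℝ) × (κ → ℝ), (⨆ ij : ι × κ, (α * p.1 ij.1 + β * p.2 ij.2))
          ∂(gaussianPi ι).prod (gaussianPi κ) := by
        refine integral_mono (sι.add sκ)
          (integrable_iSup_of_finite fun ij ↦ (hY.eval ij).integrable) fun p ↦ ?_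
        obtain ⟨i, hi⟩ := exists_eq_ciSup_of_finite (f := p.1)
        obtain ⟨j, hj⟩ := exists_eq_ciSup_of_finite (f := p.2)
        simp only [← hi, ← hj]
        exact le_ciSup (f := fun ij : ι × κ ↦ α * p.1 ij.1 + β * p.2 ij.2)
          (Finite.bddAbove_range _) (i, j)
    _ ≤ gaussianMax (ι × κ) := by
        refine integral_iSup_le_of_variance_sub_le hasGaussianLaw_gaussianPi hY
          integral_eval_gaussianPi (fun ij ↦ ?_) fun ij kl ↦ ?_
        · rw [integral_add (((iι _).const_mul α).comp_fst _) (((iκ _).const_mul β).comp_snd _),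
            integral_fun_fst (fun x : ι → ℝ ↦ α * x ij.1),
            integral_fun_snd (fun x : κ → ℝ ↦ β * x ij.2), integral_const_mul,
            integral_const_mul, integral_eval_gaussianPi, integral_eval_gaussianPi]
          simp
        · rcases eq_or_ne ij kl with rfl | hne
          · simp [variance_fun_zero]
          rw [variance_eval_sub_eval_gaussianPi hne]
          have e1 : (fun p : (ι → ℝ) × (κ → ℝ) ↦
              α * p.1 ij.1 + β * p.2 ij.2 - (α * p.1 kl.1 + β * p.2 kl.2)) =
              fun p ↦ α * (p.1 ij.1 - p.1 kl.1) + β * (p.2 ij.2 - p.2 kl.2) := by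
            ext p
            ring
          rw [e1, variance_add_prod (X := fun x : ι → ℝ ↦ α * (x ij.1 - x kl.1))
            (Y := fun x : κ → ℝ ↦ β * (x ij.2 - x kl.2))
            (((hasGaussianLaw_eval_gaussianPi _).memLp_two.sub
              (hasGaussianLaw_eval_gaussianPi _).memLp_two).const_mul α)
            (((hasGaussianLaw_eval_gaussianPi _).memLp_two.sub
              (hasGaussianLaw_eval_gaussianPi _).memLp_two).const_mul β),
            variance_const_mul, variance_const_mul]
          have h1 := mul_le_mul_of_nonneg_left
            (variance_eval_sub_eval_gaussianPi_le ij.1 kl.1) (sq_nonneg α)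
          have h2 := mul_le_mul_of_nonneg_left
            (variance_eval_sub_eval_gaussianPi_le ij.2 kl.2) (sq_nonneg β)
          linarith

end StandardGaussian

section GaussianMaxBounds

variable {Ω : Type*} [MeasurableSpace Ω] {P : Measure Ω} {ι κ : Type*} [Fintype ι] [Fintype κ]

theorem integral_abs_gaussianReal_zero_one : ∫ x, |x| ∂gaussianReal 0 1 = √(2 / π) := by
  rw [integral_gaussianReal_eq_integral_smul one_ne_zero]
  let f : ℝ → ℝ := fun y ↦ (√(2 * π))⁻¹ * (y ^ (1 : ℝ) * rexp (-(1 / 2) * y ^ (2 : ℝ)))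
  have h (x : ℝ) : gaussianPDFReal 0 1 x • |x| = f |x| := by
    simp [gaussianPDFReal, f]
    ring_nf
  rw [integral_congr_ae (ae_of_all _ h), integral_comp_abs (f := f), integral_const_mul,
    integral_rpow_mul_exp_neg_mul_rpow (by norm_num) (by norm_num) (by norm_num)]
  norm_num
  field_simp
  norm_num

theorem integral_abs_of_hasGaussianLaw {W : Ω → ℝ} (hW : HasGaussianLaw W P)
    (h0 : ∫ ω, W ω ∂P = 0) : ∫ ω, |W ω| ∂P = √(2 * Var[W; P] / π) := by
  have h1 : P.map W = gaussianReal 0 (Var[W; P]).toNNReal := by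
    rw [hW.map_eq_gaussianReal, h0]
  have h2 : gaussianReal 0 (Var[W; P]).toNNReal =
      (gaussianReal 0 1).map (fun x ↦ √Var[W; P] * x) := by
    rw [gaussianReal_map_const_mul]
    congr 1
    · simp
    · ext
      simp [variance_nonneg]
  rw [← integral_map (f := fun x : ℝ ↦ |x|) hW.aemeasurable (by fun_prop), h1, h2,
    integral_map (by fun_prop) (by fun_prop)]
  simp_rw [abs_mul, abs_of_nonneg (sqrt_nonneg _)]
  rw [integral_const_mul, integral_abs_gaussianReal_zero_one, ← sqrt_mul (variance_nonneg _ _)]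
  congr 1
  ring

theorem variance_sum_mul_eval_gaussianPi (c : ι → ℝ) :
    Var[fun x : ι → ℝ ↦ ∑ i, c i * x i; gaussianPi ι] = ∑ i, c i ^ 2 := by
  have := variance_sum_pi (μ := fun _ : ι ↦ gaussianReal 0 1) (X := fun i x ↦ c i * x)
    fun i ↦ (memLp_id_gaussianReal 2).const_mul (c i)
  rw [Finset.sum_fn] at this
  rw [gaussianPi, this]
  refine Finset.sum_congr rfl fun i _ ↦ ?_
  rw [variance_const_mul, variance_fun_id_gaussianReal, NNReal.coe_one, mul_one]

/-- A linear combination of independent standard Gaussian variables has the first absolute moment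
of a centered Gaussian variable with the corresponding variance. -/
theorem integral_abs_sum_mul_gaussianPi (c : ι → ℝ) :
    Integrable (fun x : ι → ℝ ↦ |∑ i, c i * x i|) (gaussianPi ι) ∧
      ∫ x : ι → ℝ, |∑ i, c i * x i| ∂gaussianPi ι = √(2 * (∑ i, c i ^ 2) / π) := by
  have h : HasGaussianLaw (fun x : ι → ℝ ↦ ∑ i, c i * x i) (gaussianPi ι) := by
    have := hasGaussianLaw_gaussianPi.map_fun
      (∑ i, c i • ContinuousLinearMap.proj (R := ℝ) (φ := fun _ : ι ↦ ℝ) i)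
    simpa using this
  refine ⟨h.integrable.abs, ?_⟩
  rw [integral_abs_of_hasGaussianLaw h, variance_sum_mul_eval_gaussianPi]
  rw [integral_finsetSum _ fun i _ ↦ (hasGaussianLaw_eval_gaussianPi i).integrable.const_mul _]
  simp [integral_const_mul, integral_eval_gaussianPi]

theorem integral_le_two_mul_gaussianMax [Nonempty ι] {f : (ι → ℝ) → ℝ}
    (hf : Integrable f (gaussianPi ι))
    (hle : ∀ (x : ι → ℝ) (M m : ℝ), (∀ i, x i ≤ M) → (∀ i, -x i ≤ m) → f x ≤ M + m) :
    ∫ x, f x ∂gaussianPi ι ≤ 2 * gaussianMax ι :=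
  integral_le_two_mul_integral_iSup hasGaussianLaw_gaussianPi integral_eval_gaussianPi hf
    fun x ↦ hle x _ _ (le_ciSup (Finite.bddAbove_range _)) (le_ciSup (Finite.bddAbove_range _))

theorem integral_abs_sub_gaussianPi {i j : ι} (hij : i ≠ j) :
    Integrable (fun x : ι → ℝ ↦ |x i - x j|) (gaussianPi ι) ∧
      ∫ x : ι → ℝ, |x i - x j| ∂gaussianPi ι = 2 * √(1 / π) := by
  have h : HasGaussianLaw (fun x : ι → ℝ ↦ x i - x j) (gaussianPi ι) :=
    hasGaussianLaw_gaussianPi.map_fun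
      (ContinuousLinearMap.proj (R := ℝ) (φ := fun _ : ι ↦ ℝ) i - ContinuousLinearMap.proj j)
  refine ⟨h.integrable.abs, ?_⟩
  rw [integral_abs_of_hasGaussianLaw h, variance_eval_sub_eval_gaussianPi hij, mul_div_assoc,
    div_eq_mul_one_div 2 π, ← mul_assoc, sqrt_mul (by norm_num), sqrt_mul_self zero_le_two]
  rw [integral_sub (hasGaussianLaw_eval_gaussianPi i).integrable
    (hasGaussianLaw_eval_gaussianPi j).integrable, integral_eval_gaussianPi,
    integral_eval_gaussianPi, sub_zero]

theorem sqrt_le_gaussianMax_fin_two : √(1 / π) ≤ gaussianMax (Fin 2) := by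
  have h := integral_abs_sub_gaussianPi (zero_ne_one (α := Fin 2))
  have := integral_le_two_mul_gaussianMax h.1 fun x M m hM hm ↦ by
    rw [abs_le]
    constructor <;> linarith [hM 0, hM 1, hm 0, hm 1]
  rw [h.2] at this
  linarith

theorem sqrt_le_gaussianMax_fin_three : √(9 / 4 / π) ≤ gaussianMax (Fin 3) := by
  have h1 := integral_abs_sub_gaussianPi (show (0 : Fin 3) ≠ 1 by decide)
  have h2 := integral_abs_sub_gaussianPi (show (0 : Fin 3) ≠ 2 by decide)
  have h3 := integral_abs_sub_gaussianPi (show (1 : Fin 3) ≠ 2 by decide)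
  have := integral_le_two_mul_gaussianMax (((h1.1.add h2.1).add h3.1).div_const 2)
    fun x M m hM hm ↦ by
    have := hM 0; have := hM 1; have := hM 2; have := hm 0; have := hm 1; have := hm 2
    simp only [Pi.add_apply]
    rcases abs_cases (x 0 - x 1) with h | h <;> rcases abs_cases (x 0 - x 2) with h' | h' <;>
      rcases abs_cases (x 1 - x 2) with h'' | h'' <;> linarith
  rw [integral_div, integral_add' (h1.1.add h2.1) h3.1, integral_add' h1.1 h2.1, h1.2, h2.2, h3.2]
    at this
  rw [show 9 / 4 / π = (3 / 2) ^ 2 * (1 / π) by ring, sqrt_mul (by positivity),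
    sqrt_sq (by positivity)]
  linarith

theorem sqrt_le_gaussianMax_fin_four : √(291 / 100 / π) ≤ gaussianMax (Fin 4) := by
  have h1 := integral_abs_sub_gaussianPi (show (0 : Fin 4) ≠ 1 by decide)
  have h2 := integral_abs_sub_gaussianPi (show (2 : Fin 4) ≠ 3 by decide)
  have h3 : Integrable (fun x : Fin 4 → ℝ ↦ |x 0 + x 1 - x 2 - x 3|) (gaussianPi (Fin 4)) ∧
      ∫ x : Fin 4 → ℝ, |x 0 + x 1 - x 2 - x 3| ∂gaussianPi (Fin 4) = √8 * √(1 / π) := by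
    have := integral_abs_sum_mul_gaussianPi ![1, 1, -1, -1]
    have e1 (x : Fin 4 → ℝ) :
        ∑ i, (![1, 1, -1, -1] : Fin 4 → ℝ) i * x i = x 0 + x 1 - x 2 - x 3 := by
      simp [Fin.sum_univ_four]
      ring
    have e2 : 2 * ∑ i, (![1, 1, -1, -1] : Fin 4 → ℝ) i ^ 2 = 8 := by
      simp [Fin.sum_univ_four]
      norm_num
    simpa only [e1, e2, ← sqrt_mul (show (0 : ℝ) ≤ 8 by norm_num), mul_one_div] using this
  have := integral_le_two_mul_gaussianMax (((h1.1.add h2.1).add h3.1).div_const 2)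
    fun x M m hM hm ↦ by
    have := hM 0; have := hM 1; have := hM 2; have := hM 3
    have := hm 0; have := hm 1; have := hm 2; have := hm 3
    simp only [Pi.add_apply]
    rcases abs_cases (x 0 - x 1) with h | h <;> rcases abs_cases (x 2 - x 3) with h' | h' <;>
      rcases abs_cases (x 0 + x 1 - x 2 - x 3) with h'' | h'' <;> linarith
  rw [integral_div, integral_add' (h1.1.add h2.1) h3.1, integral_add' h1.1 h2.1, h1.2, h2.2, h3.2]
    at this
  have h8 : √(291 / 100) ≤ 1 + √8 / 4 := by
    have h8' : (0 : ℝ) ≤ √8 := sqrt_nonneg _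
    have h8'' : √8 ^ 2 = 8 := sq_sqrt (by norm_num)
    refine sqrt_le_iff.2 ⟨by positivity, ?_⟩
    nlinarith
  rw [div_eq_mul_one_div (291 / 100) π, sqrt_mul (by norm_num)]
  linarith [mul_le_mul_of_nonneg_right h8 (sqrt_nonneg (1 / π))]

theorem sqrt_add_le_gaussianMax_mul {m n : ℕ} [NeZero m] [NeZero n] {c d : ℝ} (hc : 0 < c)
    (hd : 0 < d) (hm : √(c / π) ≤ gaussianMax (Fin m)) (hn : √(d / π) ≤ gaussianMax (Fin n)) :
    √((c + d) / π) ≤ gaussianMax (Fin (m * n)) := by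
  have := sqrt_sq_add_sq_le_gaussianMax_prod (by positivity) (by positivity) hm hn
  rw [sq_sqrt (by positivity), sq_sqrt (by positivity), ← add_div] at this
  exact this.trans (gaussianMax_mono finProdFinEquiv.toEmbedding)

theorem sqrt_add_one_le_gaussianMax_two_pow {k : ℕ} (hk : 4 ≤ k) :
    √((k + 1) / π) ≤ gaussianMax (Fin (2 ^ k)) := by
  induction k, hk using Nat.le_induction with
  | base =>
    change _ ≤ gaussianMax (Fin (4 * 4))
    refine le_trans (sqrt_le_sqrt ?_) (sqrt_add_le_gaussianMax_mul (c := 291 / 100)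
      (d := 291 / 100) (by norm_num) (by norm_num)
      sqrt_le_gaussianMax_fin_four sqrt_le_gaussianMax_fin_four)
    refine div_le_div_of_nonneg_right ?_ pi_pos.le
    norm_num
  | succ k hk ih =>
    rw [pow_succ]
    push_cast
    exact sqrt_add_le_gaussianMax_mul (by positivity) one_pos ih sqrt_le_gaussianMax_fin_two

theorem logb_two_natCast_le {N p q : ℕ} (hN : 0 < N) (hq : 0 < q) (h : N ^ q ≤ 2 ^ p) :
    logb 2 N ≤ p / q := by
  have h1 : logb 2 ((N : ℝ) ^ q) ≤ logb 2 (2 ^ p) :=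
    logb_le_logb_of_le one_lt_two (by positivity) (by exact_mod_cast h)
  rw [logb_pow, logb_pow, logb_self_eq_one one_lt_two] at h1
  rw [le_div_iff₀ (by positivity)]
  linarith

theorem sqrt_logb_le_gaussianMax {N : ℕ} (hN : 2 ≤ N) :
    √(logb 2 N / π) ≤ gaussianMax (Fin N) := by
  have : NeZero N := ⟨by lia⟩
  have key {M : ℕ} [NeZero M] {c : ℝ} (hMN : M ≤ N) (hM : √(c / π) ≤ gaussianMax (Fin M))
      (hc : logb 2 N ≤ c) : √(logb 2 N / π) ≤ gaussianMax (Fin N) :=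
    (sqrt_le_sqrt (by gcongr)).trans (hM.trans (gaussianMax_mono (Fin.castLEEmb hMN)))
  have hlog {p q : ℕ} (hq : 0 < q) (h : N ^ q ≤ 2 ^ p) : logb 2 N ≤ p / q :=
    logb_two_natCast_le (by lia) hq h
  rcases lt_or_ge N 3 with h3 | h3
  · refine key hN sqrt_le_gaussianMax_fin_two ((hlog (p := 1) one_pos ?_).trans (by norm_num))
    lia
  rcases lt_or_ge N 4 with h4 | h4
  · refine key h3 sqrt_le_gaussianMax_fin_three ((hlog (p := 2) one_pos ?_).trans (by norm_num))
    lia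
  rcases lt_or_ge N 8 with h8 | h8
  · refine key h4 sqrt_le_gaussianMax_fin_four
      ((hlog (p := 29) (q := 10) (by norm_num) ?_).trans (by norm_num))
    exact (Nat.pow_le_pow_left (Nat.le_of_lt_succ h8) 10).trans (by norm_num)
  rcases lt_or_ge N 16 with h16 | h16
  · refine key h8 (sqrt_add_le_gaussianMax_mul (by norm_num) one_pos sqrt_le_gaussianMax_fin_four
      sqrt_le_gaussianMax_fin_two) ((hlog (p := 43) (q := 11) (by norm_num) ?_).trans (by norm_num))
    exact (Nat.pow_le_pow_left (Nat.le_of_lt_succ h16) 11).trans (by norm_num)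
  · refine key (Nat.pow_log_le_self 2 (by lia))
      (sqrt_add_one_le_gaussianMax_two_pow (Nat.le_log_of_pow_le one_lt_two h16)) ?_
    have := hlog (p := Nat.log 2 N + 1) (q := 1) one_pos
      (by simpa using (Nat.lt_pow_succ_log_self one_lt_two N).le)
    simpa using this

end GaussianMaxBounds

/-- Finitely many values of a centered Gaussian process are jointly Gaussian and centered. -/
theorem IsCenteredGaussianOn.hasGaussianLaw {Ω : Type} [MeasurableSpace Ω] {μ : Measure Ω}
    {X : ℝ → Ω → ℝ} {S : Set ℝ} (h : IsCenteredGaussianOn μ X S) {k : ℕ} {ts : Fin k → ℝ}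
    (hts : ∀ i, ts i ∈ S) :
    HasGaussianLaw (fun ω i ↦ X (ts i) ω) μ ∧ ∀ i, ∫ ω, X (ts i) ω ∂μ = 0 := by
  have hm : Measurable (fun ω i ↦ X (ts i) ω) := measurable_pi_lambda _ fun i ↦ h.1 _ (hts i)
  refine ⟨⟨isGaussian_of_map_eq_gaussianReal fun L ↦ ?_⟩, fun i ↦ ?_⟩
  · obtain ⟨v, hv⟩ := h.2 k (fun i ↦ L (Pi.single i 1)) ts hts
    refine ⟨0, v, ?_⟩
    rw [← hv, Measure.map_map (by fun_prop) hm]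
    congr 1
    ext ω
    simp only [Function.comp_apply]
    conv_lhs => rw [pi_eq_sum_univ' (fun i ↦ X (ts i) ω)]
    simp [map_sum, mul_comm]
  · obtain ⟨v, hv⟩ := h.2 k (Pi.single i 1) ts hts
    have e : (fun ω ↦ ∑ j, (Pi.single i 1 : Fin k → ℝ) j * X (ts j) ω) = X (ts i) := by
      ext ω
      simp [Pi.single_apply]
    rw [e] at hv
    rw [← integral_map (f := fun x : ℝ ↦ x) (h.1 _ (hts i)).aemeasurable (by fun_prop), hv,
      integral_id_gaussianReal]

/-- Sudakov-type lower bound for the discrete maximum: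
`E[max_{0≤i≤n} X_{i/n}] ≥ C n^{-H} √(log₂(n+1)/(2π))`. -/
theorem stmt15 {Ω : Type} [MeasurableSpace Ω] (μ : Measure Ω) [IsProbabilityMeasure μ]
    (X : ℝ → Ω → ℝ) (C H : ℝ) (hC : 0 < C) (hH : H ∈ Ioo (0:ℝ) 1)
    (hgauss : IsCenteredGaussianOn μ X (Icc 0 1))
    (hlow : ∀ s ∈ Icc (0:ℝ) 1, ∀ t ∈ Icc (0:ℝ) 1,
      C * |t - s| ^ H ≤ l2norm μ (fun ω => X t ω - X s ω))
    (n : ℕ) (hn : 1 ≤ n) :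
    C * (n : ℝ) ^ (-H) * Real.sqrt (Real.logb 2 (n + 1) / (2 * π)) ≤
      expMaxGrid μ X n := by
  have hn0 : (0 : ℝ) < n := by exact_mod_cast hn
  have hts (i : Fin (n + 1)) : ((i : ℕ) : ℝ) / n ∈ Icc (0 : ℝ) 1 := by
    refine ⟨by positivity, (div_le_one hn0).2 ?_⟩
    exact_mod_cast Nat.le_of_lt_succ i.2
  obtain ⟨hg, h0⟩ := hgauss.hasGaussianLaw hts
  set δ : ℝ := C * (n : ℝ) ^ (-H) with hδ
  have hδ0 : 0 < δ := by positivity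
  have hvar (i j : Fin (n + 1)) (hij : i ≠ j) :
      2 * (δ / √2) ^ 2 ≤ Var[fun ω ↦ X ((i : ℕ) / n) ω - X ((j : ℕ) / n) ω; μ] := by
    have hdist : (n : ℝ)⁻¹ ≤ |((i : ℕ) : ℝ) / n - ((j : ℕ) : ℝ) / n| := by
      rw [← sub_div, abs_div, abs_of_pos hn0, inv_eq_one_div]
      refine div_le_div_of_nonneg_right ?_ hn0.le
      have : (1 : ℤ) ≤ |((i : ℕ) : ℤ) - ((j : ℕ) : ℤ)| :=
        Int.one_le_abs (sub_ne_zero.2 fun h ↦ hij (Fin.ext (by exact_mod_cast h)))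
      exact_mod_cast this
    have hle : δ ≤ l2norm μ fun ω ↦ X ((i : ℕ) / n) ω - X ((j : ℕ) / n) ω := by
      refine le_trans ?_ (hlow _ (hts j) _ (hts i))
      rw [hδ, rpow_neg hn0.le, ← inv_rpow hn0.le]
      gcongr
      exact hH.1.le
    rw [variance_eq_integral (X := fun ω ↦ X ((i : ℕ) / n) ω - X ((j : ℕ) / n) ω)
        ((hg.eval i).aemeasurable.sub (hg.eval j).aemeasurable),
      integral_sub (hg.eval i).integrable (hg.eval j).integrable, h0, h0]
    simp only [sub_zero]
    rw [div_pow, sq_sqrt zero_le_two, mul_div_cancel₀ _ two_ne_zero]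
    exact (le_sqrt' hδ0).1 hle
  have hmax := sqrt_logb_le_gaussianMax (N := n + 1) (by lia)
  push_cast at hmax
  calc δ * √(logb 2 (n + 1) / (2 * π)) = δ / √2 * √(logb 2 (n + 1) / π) := by
        rw [mul_comm 2 π, ← div_div, sqrt_div' _ zero_le_two]
        ring
    _ ≤ δ / √2 * gaussianMax (Fin (n + 1)) := by gcongr
    _ ≤ expMaxGrid μ X n :=
        mul_gaussianMax_le hg h0 (by positivity) hvar (Function.Embedding.refl _)
end
end

section
/- Let H ∈ (0,1) and let n be an integer with n ≥ 2^{1/H}. Then f(H) − f(H,n) ≤ 6√(ln n)/n^H + 0.0107. -/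
open MeasureTheory ProbabilityTheory Real Set Filter Topology

noncomputable section

lemma IsCenteredGaussianOn.memLp {Ω : Type} [MeasurableSpace Ω] {μ : Measure Ω}
    {X : ℝ → Ω → ℝ} {S : Set ℝ} (hX : IsCenteredGaussianOn μ X S) {t : ℝ} (ht : t ∈ S) :
    MemLp (X t) 2 μ := by
  obtain ⟨v, hv⟩ := hX.2 1 (fun _ => 1) (fun _ => t) (fun _ => ht)
  simp only [Finset.univ_unique, one_mul, Finset.sum_const, Finset.card_singleton,
    one_smul] at hv
  have h : MemLp id 2 (μ.map (X t)) := by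
    rw [hv]; exact memLp_id_gaussianReal 2
  exact (memLp_map_measure_iff aestronglyMeasurable_id (hX.1 t ht).aemeasurable).1 h

lemma IsCenteredGaussianOn.integral_eq_zero {Ω : Type} [MeasurableSpace Ω] {μ : Measure Ω}
    {X : ℝ → Ω → ℝ} {S : Set ℝ} (hX : IsCenteredGaussianOn μ X S) {t : ℝ} (ht : t ∈ S) :
    ∫ ω, X t ω ∂μ = 0 := by
  obtain ⟨v, hv⟩ := hX.2 1 (fun _ => 1) (fun _ => t) (fun _ => ht)
  simp only [Finset.univ_unique, one_mul, Finset.sum_const, Finset.card_singleton,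
    one_smul] at hv
  have h := integral_map (μ := μ) (hX.1 t ht).aemeasurable (f := fun x : ℝ => x)
    aestronglyMeasurable_id
  rw [hv, integral_id_gaussianReal] at h
  exact h.symm

/-- The increments of a fractional Brownian motion have law `N(0, |t - s| ^ (2H))`. -/
lemma IsFBM.map_sub {Ω : Type} [MeasurableSpace Ω] {μ : Measure Ω} {H : ℝ} {B : ℝ → Ω → ℝ}
    (hH : 0 < H) (hB : IsFBM μ H B) {s t : ℝ} (hs : 0 ≤ s) (ht : 0 ≤ t) :
    μ.map (fun ω => B t ω - B s ω) = gaussianReal 0 (|t - s| ^ (2 * H)).toNNReal := by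
  obtain ⟨hG, -, -, hcov⟩ := hB
  obtain ⟨v, hv⟩ := hG.2 2 ![1, -1] ![t, s] (by
    intro i; fin_cases i
    · exact ht
    · exact hs)
  have hfun : (fun ω => ∑ i, (![1, -1] : Fin 2 → ℝ) i * B ((![t, s] : Fin 2 → ℝ) i) ω) =
      fun ω => B t ω - B s ω := by
    ext ω; simp [Fin.sum_univ_two, sub_eq_add_neg]
  rw [hfun] at hv
  have hmeas : Measurable (fun ω => B t ω - B s ω) := (hG.1 t ht).sub (hG.1 s hs)
  have hmt := hG.memLp (t := t) ht
  have hms := hG.memLp (t := s) hs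
  have hsq : ∫ ω, (B t ω - B s ω) ^ 2 ∂μ = |t - s| ^ (2 * H) := by
    have e : ∀ ω, (B t ω - B s ω) ^ 2 = B t ω * B t ω - 2 * (B s ω * B t ω) + B s ω * B s ω :=
      fun ω => by ring
    simp_rw [e]
    have i1 : Integrable (fun ω => B t ω * B t ω) μ := hmt.integrable_mul hmt
    have i2 : Integrable (fun ω => B s ω * B t ω) μ := hms.integrable_mul hmt
    have i3 : Integrable (fun ω => B s ω * B s ω) μ := hms.integrable_mul hms
    have i4 : Integrable (fun ω => B t ω * B t ω - 2 * (B s ω * B t ω)) μ :=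
      i1.sub (i2.const_mul 2)
    rw [integral_add i4 i3, integral_sub i1 (i2.const_mul 2),
      integral_const_mul, hcov t t ht ht, hcov s t hs ht, hcov s s hs hs]
    have : (0 : ℝ) ^ (2 * H) = 0 := Real.zero_rpow (by positivity)
    simp only [sub_self, abs_zero, this]
    ring
  have hvar : (v : ℝ) = |t - s| ^ (2 * H) := by
    have h1 : ∫ x, x ^ 2 ∂(gaussianReal 0 v) = v := by
      have h := variance_eq_integral (μ := gaussianReal 0 v) (X := id) aemeasurable_id
      rw [variance_id_gaussianReal] at h
      simpa using h.symm
    rw [← h1, ← hv, integral_map hmeas.aemeasurable (by fun_prop), hsq]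
  rw [hv, ← hvar, Real.toNNReal_coe]

lemma integral_exp_mul_of_map_gaussianReal {Ω : Type} [MeasurableSpace Ω] {μ : Measure Ω}
    {Y : Ω → ℝ} (hY : Measurable Y) {v : NNReal} (h : μ.map Y = gaussianReal 0 v) (l : ℝ) :
    Integrable (fun ω => exp (l * Y ω)) μ ∧ ∫ ω, exp (l * Y ω) ∂μ = exp (v * l ^ 2 / 2) := by
  constructor
  · have := integrable_exp_mul_gaussianReal (μ := 0) (v := v) l
    rw [← h] at this
    exact (integrable_map_measure (by fun_prop) hY.aemeasurable).1 this
  · have := mgf_gaussianReal h l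
    simpa [mgf] using this

lemma le_iSup_grid {Ω : Type} (X : ℝ → Ω → ℝ) (m : ℕ) (ω : Ω) {i : ℕ} (hi : i ≤ m) :
    X ((i : ℝ) / m) ω ≤ ⨆ i : Fin (m + 1), X (((i : ℕ) : ℝ) / (m : ℝ)) ω :=
  le_ciSup (f := fun i : Fin (m + 1) => X (((i : ℕ) : ℝ) / (m : ℝ)) ω)
    (Set.finite_range _).bddAbove ⟨i, Nat.lt_succ_of_le hi⟩

lemma IsCenteredGaussianOn.integrable_iSup_grid {Ω : Type} [MeasurableSpace Ω] {μ : Measure Ω}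
    [IsProbabilityMeasure μ] {X : ℝ → Ω → ℝ} (hX : IsCenteredGaussianOn μ X (Ici 0)) (m : ℕ) :
    Integrable (fun ω => ⨆ i : Fin (m + 1), X (((i : ℕ) : ℝ) / (m : ℝ)) ω) μ := by
  have hi : ∀ i : Fin (m + 1), (((i : ℕ) : ℝ) / (m : ℝ)) ∈ Ici (0 : ℝ) := fun i =>
    mem_Ici.2 (div_nonneg (Nat.cast_nonneg _) (Nat.cast_nonneg _))
  have hint : Integrable (fun ω => ∑ i : Fin (m + 1), |X (((i : ℕ) : ℝ) / (m : ℝ)) ω|) μ :=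
    integrable_finsetSum _ fun i _ =>
      ((hX.memLp (hi i)).integrable one_le_two).abs
  refine hint.mono' (Measurable.iSup fun i => hX.1 _ (hi i)).aestronglyMeasurable
    (ae_of_all _ fun ω => ?_)
  obtain ⟨i, h⟩ := exists_eq_ciSup_of_finite (f := fun i : Fin (m + 1) =>
    X (((i : ℕ) : ℝ) / (m : ℝ)) ω)
  rw [← h, Real.norm_eq_abs]
  exact Finset.single_le_sum (f := fun i : Fin (m + 1) => |X (((i : ℕ) : ℝ) / (m : ℝ)) ω|)
    (fun _ _ => abs_nonneg _) (Finset.mem_univ i)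

/-- Refining a grid of mesh `1 / m` by a factor `n` increases the expected maximum of a fractional
Brownian motion by at most `√(2 ln (n m)) / m ^ H`. -/
lemma IsFBM.expMaxGrid_mul_sub_le {Ω : Type} [MeasurableSpace Ω] {μ : Measure Ω}
    [IsProbabilityMeasure μ] {H : ℝ} {B : ℝ → Ω → ℝ} (hH : 0 < H) (hB : IsFBM μ H B)
    {n m : ℕ} (hn : 2 ≤ n) (hm : 1 ≤ m) :
    expMaxGrid μ B (n * m) - expMaxGrid μ B m ≤
      √(2 * log ((n * m : ℕ) : ℝ)) / (m : ℝ) ^ H := by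
  set N := n * m with hN
  have hN2 : 2 ≤ N := by nlinarith
  have hm0 : (0 : ℝ) < m := by exact_mod_cast hm
  have hn0 : (0 : ℝ) < n := by exact_mod_cast (by omega : 0 < n)
  have hN0 : (0 : ℝ) < N := by exact_mod_cast (by omega : 0 < N)
  have hNr : (N : ℝ) = n * m := by rw [hN]; push_cast; ring
  set L := log (N : ℝ) with hL
  have hLpos : 0 < L := Real.log_pos (by exact_mod_cast (by omega : 1 < N))
  set r := √(2 * L) with hr
  have hrpos : 0 < r := Real.sqrt_pos.2 (by positivity)
  have hrsq : r ^ 2 = 2 * L := Real.sq_sqrt (by positivity)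
  set p := (m : ℝ) ^ H with hp
  have hppos : 0 < p := by positivity
  set l := r * p with hl
  have hlpos : 0 < l := by positivity
  let D : ℕ → Ω → ℝ := fun i ω => B ((i : ℝ) / N) ω - B (((i / n : ℕ) : ℝ) / m) ω
  have hs : ∀ i : ℕ, (0 : ℝ) ≤ (i : ℝ) / N := fun i => by positivity
  have hs' : ∀ i : ℕ, (0 : ℝ) ≤ ((i / n : ℕ) : ℝ) / m := fun i => by positivity
  have hDmeas : ∀ i, Measurable (D i) := fun i => (hB.1.1 _ (hs i)).sub (hB.1.1 _ (hs' i))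
  have hD : ∀ i, Integrable (fun ω => exp (l * D i ω)) μ ∧ ∫ ω, exp (l * D i ω) ∂μ ≤ N := by
    intro i
    obtain ⟨h1, h2⟩ := integral_exp_mul_of_map_gaussianReal (hDmeas i)
      (hB.map_sub hH (hs' i) (hs i)) l
    refine ⟨h1, ?_⟩
    rw [h2, ← Real.le_log_iff_exp_le hN0, Real.coe_toNNReal _ (by positivity)]
    have hdist : |(i : ℝ) / N - ((i / n : ℕ) : ℝ) / m| ≤ (m : ℝ)⁻¹ := by
      have hdm : (i : ℝ) = n * (i / n : ℕ) + (i % n : ℕ) := by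
        exact_mod_cast (Nat.div_add_mod i n).symm
      have hmod : ((i % n : ℕ) : ℝ) ≤ n := by
        exact_mod_cast (Nat.mod_lt i (by omega)).le
      have e : (i : ℝ) / N - ((i / n : ℕ) : ℝ) / m = ((i % n : ℕ) : ℝ) / n * (m : ℝ)⁻¹ := by
        rw [hNr]
        field_simp
        linarith
      rw [e, abs_of_nonneg (by positivity)]
      exact mul_le_of_le_one_left (by positivity) ((div_le_one hn0).2 hmod)
    have hpow : |(i : ℝ) / N - ((i / n : ℕ) : ℝ) / m| ^ (2 * H) ≤ (p ^ 2)⁻¹ := by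
      refine (Real.rpow_le_rpow (abs_nonneg _) hdist (by positivity)).trans_eq ?_
      rw [Real.inv_rpow hm0.le, mul_comm, Real.rpow_mul hm0.le, Real.rpow_two]
    have hl2 : l ^ 2 = 2 * L * p ^ 2 := by rw [hl, mul_pow, hrsq]
    calc _ ≤ (p ^ 2)⁻¹ * l ^ 2 / 2 := by gcongr
      _ = L := by rw [hl2]; field_simp
  have hbound : ∀ ω, (⨆ i : Fin (N + 1), B (((i : ℕ) : ℝ) / (N : ℝ)) ω) ≤
      (⨆ i : Fin (m + 1), B (((i : ℕ) : ℝ) / (m : ℝ)) ω) +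
        (2 * L - 1 + exp (-(2 * L)) * ∑ i ∈ Finset.range N, exp (l * D i ω)) / l := by
    intro ω
    set R := (2 * L - 1 + exp (-(2 * L)) * ∑ i ∈ Finset.range N, exp (l * D i ω)) / l with hR
    have hDR : ∀ i < N, D i ω ≤ R := by
      intro i hi
      rw [hR, le_div_iff₀ hlpos]
      have h1 : exp (l * D i ω) ≤ ∑ i ∈ Finset.range N, exp (l * D i ω) :=
        Finset.single_le_sum (f := fun i => exp (l * D i ω)) (fun _ _ => (exp_pos _).le)
          (Finset.mem_range.2 hi)
      have h2 := Real.add_one_le_exp (-(2 * L) + l * D i ω)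
      rw [Real.exp_add] at h2
      have h3 := mul_le_mul_of_nonneg_left h1 (exp_pos (-(2 * L))).le
      linarith
    refine ciSup_le fun i => ?_
    rcases Nat.lt_succ_iff_lt_or_eq.1 i.2 with hi | hi
    · have h1 := hDR i hi
      have h2 := le_iSup_grid B m ω (i := (i : ℕ) / n)
        (Nat.div_le_of_le_mul (by rw [← hN]; exact hi.le))
      simp only [D] at h1
      linarith
    · have h1 := hDR 0 (by omega)
      have h2 := le_iSup_grid B m ω (i := m) le_rfl
      simp only [D, Nat.cast_zero, zero_div, Nat.zero_div, sub_self] at h1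
      rw [div_self hm0.ne'] at h2
      rw [hi, div_self hN0.ne']
      linarith
  have hiS : Integrable (fun ω => ∑ i ∈ Finset.range N, exp (l * D i ω)) μ :=
    integrable_finsetSum _ fun i _ => (hD i).1
  have hiR : Integrable (fun ω =>
      (2 * L - 1 + exp (-(2 * L)) * ∑ i ∈ Finset.range N, exp (l * D i ω)) / l) μ :=
    ((integrable_const _).add (hiS.const_mul _)).div_const _
  have hmain := integral_mono (hB.1.integrable_iSup_grid N)
    ((hB.1.integrable_iSup_grid m).add hiR) hbound
  simp only [Pi.add_apply] at hmain
  rw [integral_add (hB.1.integrable_iSup_grid m) hiR, integral_div,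
    integral_add (integrable_const _) (hiS.const_mul _), integral_const_mul,
    integral_finsetSum _ fun i _ => (hD i).1] at hmain
  have hsum : ∑ i ∈ Finset.range N, ∫ ω, exp (l * D i ω) ∂μ ≤ N * N := by
    refine (Finset.sum_le_sum fun i _ => (hD i).2).trans_eq ?_
    simp
  have hexp : exp (-(2 * L)) * (N * N : ℝ) = 1 := by
    have : (N * N : ℝ) = exp (2 * L) := by rw [two_mul, Real.exp_add, hL, Real.exp_log hN0]
    rw [this, ← Real.exp_add]; simp
  have hsum' := mul_le_mul_of_nonneg_left hsum (exp_pos (-(2 * L))).le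
  rw [hexp] at hsum'
  have hfin : (2 * L - 1 + exp (-(2 * L)) * ∑ i ∈ Finset.range N, ∫ ω, exp (l * D i ω) ∂μ) / l ≤
      r / p := by
    rw [div_le_div_iff₀ hlpos hppos, hl]
    nlinarith
  simp only [integral_const, probReal_univ, one_smul] at hmain
  simp only [expMaxGrid]
  linarith

/-- On a continuous path, the maximum over the grid of mesh `1 / u k` tends to the supremum. -/
lemma tendsto_iSup_grid {g : ℝ → ℝ} (hg : ContinuousOn g (Icc 0 1)) {u : ℕ → ℕ}
    (hu : Tendsto u atTop atTop) :
    (∀ k, 0 < u k → (⨆ i : Fin (u k + 1), g (((i : ℕ) : ℝ) / (u k : ℝ))) ≤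
      ⨆ t : Icc (0 : ℝ) 1, g t.1) ∧
    Tendsto (fun k => ⨆ i : Fin (u k + 1), g (((i : ℕ) : ℝ) / (u k : ℝ))) atTop
      (𝓝 (⨆ t : Icc (0 : ℝ) 1, g t.1)) := by
  obtain ⟨t, ht, hmax⟩ := isCompact_Icc.exists_isMaxOn (nonempty_Icc.2 zero_le_one) hg
  have hsup : (⨆ t : Icc (0 : ℝ) 1, g t.1) = g t := by
    have : Nonempty (Icc (0 : ℝ) 1) := ⟨⟨t, ht⟩⟩
    refine le_antisymm (ciSup_le fun s => hmax s.2) ?_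
    exact le_ciSup (f := fun t : Icc (0 : ℝ) 1 => g t.1)
      ⟨g t, by rintro _ ⟨s, rfl⟩; exact hmax s.2⟩ ⟨t, ht⟩
  rw [hsup]
  have hle : ∀ k, 0 < u k →
      (⨆ i : Fin (u k + 1), g (((i : ℕ) : ℝ) / (u k : ℝ))) ≤ g t := fun k hk =>
    ciSup_le fun i => hmax ⟨by positivity, (div_le_one (by exact_mod_cast hk)).2
      (by exact_mod_cast Nat.le_of_lt_succ i.2)⟩
  refine ⟨hle, ?_⟩
  have hfl : Tendsto (fun k => ((⌊t * (u k : ℝ)⌋₊ : ℕ) : ℝ) / (u k : ℝ)) atTop (𝓝 t) :=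
    (tendsto_nat_floor_mul_div_atTop ht.1).comp (tendsto_natCast_atTop_atTop.comp hu)
  have hfloor : ∀ k, ⌊t * (u k : ℝ)⌋₊ ≤ u k := fun k =>
    Nat.floor_le_of_le (mul_le_of_le_one_left (Nat.cast_nonneg _) ht.2)
  have hlow : Tendsto (fun k => g (((⌊t * (u k : ℝ)⌋₊ : ℕ) : ℝ) / (u k : ℝ))) atTop
      (𝓝 (g t)) := by
    refine (hg t ht).tendsto.comp (tendsto_nhdsWithin_iff.2 ⟨hfl, Eventually.of_forall fun k => ?_⟩)
    exact ⟨by positivity, div_le_one_of_le₀ (by exact_mod_cast hfloor k) (Nat.cast_nonneg _)⟩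
  refine tendsto_of_tendsto_of_tendsto_of_le_of_le' hlow tendsto_const_nhds
    (Eventually.of_forall fun k => ?_) ?_
  · exact le_iSup_grid (fun s (_ : Unit) => g s) (u k) () (hfloor k)
  · filter_upwards [hu.eventually_gt_atTop 0] with k hk using hle k hk

lemma IsFBM.expMaxGrid_nonneg {Ω : Type} [MeasurableSpace Ω] {μ : Measure Ω} {H : ℝ}
    {B : ℝ → Ω → ℝ} (hB : IsFBM μ H B) (m : ℕ) : 0 ≤ expMaxGrid μ B m := by
  refine integral_nonneg_of_ae ?_
  filter_upwards [hB.2.2.1] with ω hω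
  have := le_iSup_grid B m ω (i := 0) (Nat.zero_le _)
  simpa [hω] using this

/-- An upper bound for the expected grid maxima along a sequence of meshes tending to zero bounds
the expected supremum. -/
lemma IsFBM.expMax_le {Ω : Type} [MeasurableSpace Ω] {μ : Measure Ω} [IsProbabilityMeasure μ]
    {H : ℝ} {B : ℝ → Ω → ℝ} (hB : IsFBM μ H B) {u : ℕ → ℕ} (hu : Tendsto u atTop atTop)
    (hu0 : ∀ k, 0 < u k) {C : ℝ} (hC : ∀ k, expMaxGrid μ B (u k) ≤ C) : expMax μ B ≤ C := by
  by_cases hint : Integrable (fun ω => ⨆ t : Icc (0 : ℝ) 1, B t.1 ω) μ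
  · refine le_of_tendsto' (tendsto_integral_of_dominated_convergence _
      (fun k => (hB.1.integrable_iSup_grid (u k)).aestronglyMeasurable) hint
      (fun k => ?_) ?_) hC
    · filter_upwards [hB.2.1, hB.2.2.1] with ω hω h0
      have h1 := le_iSup_grid B (u k) ω (i := 0) (Nat.zero_le _)
      rw [Nat.cast_zero, zero_div, h0] at h1
      rw [Real.norm_of_nonneg h1]
      exact (tendsto_iSup_grid (hω.mono Icc_subset_Ici_self) hu).1 k (hu0 k)
    · filter_upwards [hB.2.1] with ω hω
      exact (tendsto_iSup_grid (hω.mono Icc_subset_Ici_self) hu).2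
  · rw [expMax, integral_undef hint]
    exact (hB.expMaxGrid_nonneg (u 0)).trans (hC 0)

/-- for `n ≥ 2^{1/H}`, `f(H) - f(H,n) ≤ 6 √(ln n) / n^H + 0.0107`. -/
theorem stmt16 {Ω : Type} [MeasurableSpace Ω] (μ : Measure Ω) [IsProbabilityMeasure μ]
    (H : ℝ) (hH : H ∈ Ioo (0:ℝ) 1) (B : ℝ → Ω → ℝ) (hB : IsFBM μ H B)
    (n : ℕ) (hn : (2:ℝ) ^ (1 / H) ≤ (n : ℝ)) :
    expMax μ B - expMaxGrid μ B n ≤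
      6 * Real.sqrt (Real.log n) / (n : ℝ) ^ H + 0.0107 := by
  obtain ⟨hH0, hH1⟩ := hH
  have hn2 : 2 ≤ n := by
    have h : (2 : ℝ) ^ (1 : ℝ) ≤ 2 ^ (1 / H) :=
      Real.rpow_le_rpow_of_exponent_le one_le_two (by rw [le_div_iff₀ hH0]; linarith)
    rw [Real.rpow_one] at h
    exact_mod_cast h.trans hn
  have hn0 : (0 : ℝ) < n := by exact_mod_cast (by omega : 0 < n)
  set p := (n : ℝ) ^ H with hp
  have hp2 : 2 ≤ p := by
    have h := Real.rpow_le_rpow (by positivity) hn hH0.le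
    rwa [← Real.rpow_mul (by norm_num), one_div_mul_cancel hH0.ne', Real.rpow_one] at h
  have hp0 : 0 < p := by linarith
  set r := √(log (n : ℝ)) with hr
  have hr0 : 0 ≤ r := Real.sqrt_nonneg _
  have hstep : ∀ k : ℕ, expMaxGrid μ B (n ^ (k + 2)) - expMaxGrid μ B (n ^ (k + 1)) ≤
      r / p * (((k : ℝ) + 4) / 2 / 2 ^ k) := by
    intro k
    have h := hB.expMaxGrid_mul_sub_le hH0 hn2 (Nat.one_le_pow (k + 1) n (by omega))
    have e : n * n ^ (k + 1) = n ^ (k + 2) := by ring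
    rw [e] at h
    refine h.trans ?_
    have e1 : ((n ^ (k + 1) : ℕ) : ℝ) ^ H = p * p ^ k := by
      rw [Nat.cast_pow, hp, ← Real.rpow_natCast_mul hn0.le, mul_comm, Real.rpow_mul_natCast hn0.le]
      ring
    have e2 : √(2 * log ((n ^ (k + 2) : ℕ) : ℝ)) ≤ r * (((k : ℝ) + 4) / 2) := by
      have hlog : 0 ≤ log (n : ℝ) := Real.log_natCast_nonneg n
      refine Real.sqrt_le_iff.2 ⟨by positivity, ?_⟩
      rw [mul_pow, hr, Real.sq_sqrt hlog, Nat.cast_pow, Real.log_pow]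
      push_cast
      nlinarith [mul_nonneg hlog (sq_nonneg (k : ℝ))]
    rw [e1]
    calc _ ≤ r * (((k : ℝ) + 4) / 2) / (p * 2 ^ k) := by gcongr
      _ = _ := by field_simp
  have hsum : ∀ k : ℕ, expMaxGrid μ B (n ^ (k + 1)) ≤
      expMaxGrid μ B n + r / p * (5 - ((k : ℝ) + 5) / 2 ^ k) := by
    intro k
    induction k with
    | zero => simp
    | succ k ih =>
      have h := hstep k
      have e : r / p * (5 - (((k + 1 : ℕ) : ℝ) + 5) / 2 ^ (k + 1)) =
          r / p * (5 - ((k : ℝ) + 5) / 2 ^ k) + r / p * (((k : ℝ) + 4) / 2 / 2 ^ k) := by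
        push_cast
        field_simp
        ring
      rw [e]
      linarith
  have hrp : 0 ≤ r / p := by positivity
  have hfin := hB.expMax_le (u := fun k => n ^ (k + 1))
    ((tendsto_pow_atTop_atTop_of_one_lt (by omega : 1 < n)).comp (tendsto_add_atTop_nat 1))
    (fun k => by positivity) (C := expMaxGrid μ B n + r / p * 5) (fun k => by
      refine (hsum k).trans ?_
      have : (0 : ℝ) ≤ ((k : ℝ) + 5) / 2 ^ k := by positivity
      nlinarith)
  have e : 6 * r / p = r / p * 6 := by ring
  rw [e]
  linarith
end
end

section
/- Let H ∈ (0,1) and let n be an integer with n ≥ 2^{1/H}. Then f(H,n) ≥ 1/(5√H) − 6√(ln n)/n^H − 0.0107. -/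
open MeasureTheory ProbabilityTheory Real Set Filter Topology

noncomputable section

lemma natCast_sub_dist_eq_sum_indicator (L p q U : ℕ) (hp : p + L ≤ U) :
    ((L - Nat.dist p q : ℕ) : ℝ) = ∑ u ∈ Finset.range U,
      (if u ∈ Finset.Ico p (p + L) then (1 : ℝ) else 0) *
        (if u ∈ Finset.Ico q (q + L) then (1 : ℝ) else 0) := by
  have key : (Finset.range U).filter
      (fun u => u ∈ Finset.Ico p (p + L) ∧ u ∈ Finset.Ico q (q + L)) =
      Finset.Ico (max p q) (min p q + L) := by
    ext u
    simp only [Finset.mem_filter, Finset.mem_range, Finset.mem_Ico]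
    omega
  have hmul : ∀ u, (if u ∈ Finset.Ico p (p + L) then (1 : ℝ) else 0) *
      (if u ∈ Finset.Ico q (q + L) then (1 : ℝ) else 0) =
      if u ∈ Finset.Ico p (p + L) ∧ u ∈ Finset.Ico q (q + L) then 1 else 0 := fun u => by
    rw [ite_and]
    split_ifs <;> simp
  simp_rw [hmul]
  rw [Finset.sum_boole, key, Nat.card_Ico]
  congr 1
  unfold Nat.dist
  omega

/-- The triangular kernel `(L - |p i - p j|)₊` on the integers is positive semidefinite. -/
lemma sum_mul_natCast_sub_dist_nonneg {ι : Type*} [Fintype ι] (p : ι → ℕ) (a : ι → ℝ) (L : ℕ) :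
    0 ≤ ∑ i, ∑ j, a i * a j * ((L - Nat.dist (p i) (p j) : ℕ) : ℝ) := by
  have hU : ∀ i, p i + L ≤ ∑ j, p j + L := fun i => by
    gcongr
    exact Finset.single_le_sum (f := p) (fun _ _ => Nat.zero_le _) (Finset.mem_univ i)
  have : ∑ i, ∑ j, a i * a j * ((L - Nat.dist (p i) (p j) : ℕ) : ℝ) =
      ∑ u ∈ Finset.range (∑ j, p j + L),
        (∑ i, a i * (if u ∈ Finset.Ico (p i) (p i + L) then (1 : ℝ) else 0)) ^ 2 := by
    simp_rw [fun i j => natCast_sub_dist_eq_sum_indicator L (p i) (p j) _ (hU i), sq,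
      Finset.sum_mul_sum, Finset.mul_sum]
    rw [Finset.sum_comm_cycle]
    exact Finset.sum_congr rfl fun _ _ => Finset.sum_congr rfl fun _ _ =>
      Finset.sum_congr rfl fun _ _ => by ring
  rw [this]
  positivity

/-- A function on `{0, …, M + 1}` as a combination of triangular functions. -/
lemma eq_sum_triangular (h : ℕ → ℝ) (M k : ℕ) (hk : k ≤ M + 1) :
    h k = h (M + 1) - (h (M + 1) - h M) * ((M + 1 - k : ℕ) : ℝ) +
      ∑ L ∈ Finset.range M, (h (L + 2) - 2 * h (L + 1) + h L) * ((L + 1 - k : ℕ) : ℝ) := by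
  induction M with
  | zero =>
    obtain rfl | rfl : k = 0 ∨ k = 1 := by omega
    · simp
    · simp
  | succ M ih =>
    rw [Finset.sum_range_succ]
    rcases Nat.lt_or_ge (M + 1) k with hlt | hle
    · obtain rfl : k = M + 2 := by omega
      rw [Finset.sum_eq_zero]
      · simp
      · intro L hL
        have : L + 1 - (M + 2) = 0 := by
          have := Finset.mem_range.1 hL
          omega
        simp [this]
    · have h1 := ih hle
      rw [Nat.cast_sub hle] at h1
      rw [Nat.cast_sub hle, Nat.cast_sub (by omega)]
      push_cast at h1 ⊢
      rw [show M + 1 + 1 = M + 2 from rfl]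
      linarith

/-- A concave nondecreasing function of the distance is a conditionally negative definite
kernel on the integers. -/
lemma sum_mul_concave_dist_nonpos {ι : Type*} [Fintype ι] (p : ι → ℕ) (M : ℕ)
    (hp : ∀ i, p i ≤ M + 1) (h : ℕ → ℝ) (hmono : h M ≤ h (M + 1))
    (hconc : ∀ k, h (k + 2) - 2 * h (k + 1) + h k ≤ 0) (a : ι → ℝ) (ha : ∑ i, a i = 0) :
    ∑ i, ∑ j, a i * a j * h (Nat.dist (p i) (p j)) ≤ 0 := by
  have key : ∀ i j, a i * a j * h (Nat.dist (p i) (p j)) = h (M + 1) * (a i * a j)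
      - (h (M + 1) - h M) * (a i * a j * ((M + 1 - Nat.dist (p i) (p j) : ℕ) : ℝ))
      + ∑ L ∈ Finset.range M, (h (L + 2) - 2 * h (L + 1) + h L) *
        (a i * a j * ((L + 1 - Nat.dist (p i) (p j) : ℕ) : ℝ)) := by
    intro i j
    have hd : Nat.dist (p i) (p j) ≤ M + 1 := by
      have := hp i
      have := hp j
      unfold Nat.dist
      omega
    rw [eq_sum_triangular h M _ hd, mul_add, mul_sub, Finset.mul_sum]
    congr 1
    · ring
    · exact Finset.sum_congr rfl fun _ _ => by ring
  have h0 : ∑ i, ∑ j, h (M + 1) * (a i * a j) = 0 := by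
    simp_rw [← Finset.mul_sum, ← Finset.sum_mul, ha]
    simp
  have h1 := sum_mul_natCast_sub_dist_nonneg p a (M + 1)
  have h2 : ∑ i, ∑ j, ∑ L ∈ Finset.range M, (h (L + 2) - 2 * h (L + 1) + h L) *
        (a i * a j * ((L + 1 - Nat.dist (p i) (p j) : ℕ) : ℝ)) ≤ 0 := by
    have : ∑ i, ∑ j, ∑ L ∈ Finset.range M, (h (L + 2) - 2 * h (L + 1) + h L) *
        (a i * a j * ((L + 1 - Nat.dist (p i) (p j) : ℕ) : ℝ)) =
        ∑ L ∈ Finset.range M, (h (L + 2) - 2 * h (L + 1) + h L) *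
          ∑ i, ∑ j, (a i * a j * ((L + 1 - Nat.dist (p i) (p j) : ℕ) : ℝ)) := by
      simp_rw [Finset.mul_sum]
      rw [Finset.sum_comm_cycle]
    rw [this]
    exact Finset.sum_nonpos fun L _ =>
      mul_nonpos_of_nonpos_of_nonneg (hconc L) (sum_mul_natCast_sub_dist_nonneg p a (L + 1))
  simp_rw [key, Finset.sum_add_distrib, Finset.sum_sub_distrib]
  rw [h0]
  have h3 : ∑ i, ∑ j, (h (M + 1) - h M) *
      (a i * a j * ((M + 1 - Nat.dist (p i) (p j) : ℕ) : ℝ)) = (h (M + 1) - h M) *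
      ∑ i, ∑ j, a i * a j * ((M + 1 - Nat.dist (p i) (p j) : ℕ) : ℝ) := by
    simp_rw [Finset.mul_sum]
  rw [h3]
  have := mul_nonneg (sub_nonneg.2 hmono) h1
  linarith

lemma rpow_concave_sequence {s : ℝ} (hs0 : 0 < s) (hs1 : s ≤ 1) {x : ℝ} (hx : 0 ≤ x) :
    (x + 2) ^ s + x ^ s ≤ 2 * (x + 1) ^ s := by
  have hx2 : x + 2 ∈ Set.Ici (0 : ℝ) := by
    simp only [Set.mem_Ici]
    linarith
  have h := (Real.concaveOn_rpow hs0.le hs1).2 hx hx2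
    (show (0 : ℝ) ≤ 1 / 2 by norm_num) (show (0 : ℝ) ≤ 1 / 2 by norm_num) (by norm_num)
  simp only [smul_eq_mul] at h
  rw [show 1 / 2 * x + 1 / 2 * (x + 2) = x + 1 by ring] at h
  linarith

lemma natCast_dist (p q : ℕ) : ((Nat.dist p q : ℕ) : ℝ) = |(q : ℝ) - p| := by
  rcases le_total p q with h | h
  · rw [Nat.dist_eq_sub_of_le h, Nat.cast_sub h, abs_of_nonneg]
    exact sub_nonneg.2 (by exact_mod_cast h)
  · rw [Nat.dist_eq_sub_of_le_right h, Nat.cast_sub h, abs_sub_comm, abs_of_nonneg]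
    exact sub_nonneg.2 (by exact_mod_cast h)

/-- The covariance matrix of a fractional Brownian motion with `2H = s ≤ 1` at the times
`1, …, M + 1` is bounded below by `1 - 2 ^ s / 2`. -/
lemma fbm_quadraticForm_lower {s : ℝ} (hs0 : 0 < s) (hs1 : s ≤ 1) (M : ℕ)
    (a : Fin (M + 1) → ℝ) :
    (2 - 2 ^ s) / 2 * ∑ i, a i ^ 2 ≤ ∑ i, ∑ j, a i * a j *
      ((((i : ℕ) + 1 : ℝ) ^ s + ((j : ℕ) + 1 : ℝ) ^ s
        - |((j : ℕ) + 1 : ℝ) - ((i : ℕ) + 1)| ^ s) / 2) := by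
  set h : ℕ → ℝ := fun k => if k = 0 then 2 - 2 ^ s else (k : ℝ) ^ s with hh
  have h2s : (1 : ℝ) ≤ 2 ^ s := Real.one_le_rpow (by norm_num) hs0.le
  have h2s' : (2 : ℝ) ^ s ≤ 2 := by
    simpa using Real.rpow_le_rpow_of_exponent_le (x := 2) (by norm_num) hs1
  set p : Fin (M + 2) → ℕ := fun i => i
  have hsum : ∑ i, (Fin.cons (-∑ i, a i) a : Fin (M + 2) → ℝ) i = 0 := by
    rw [Fin.sum_univ_succ]
    simp
  have main := sum_mul_concave_dist_nonpos p M (fun i => by have := i.2; simp only [p]; omega) h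
    ?_ ?_ (Fin.cons (-∑ i, a i) a) hsum
  rotate_left
  · rcases Nat.eq_zero_or_pos M with rfl | hM
    · simp only [hh]
      norm_num
      linarith
    · simp only [hh, hM.ne', if_false, Nat.succ_ne_zero]
      gcongr
      simp
  · intro k
    rcases Nat.eq_zero_or_pos k with rfl | hk
    · simp only [hh]
      norm_num
    · have := rpow_concave_sequence hs0 hs1 (Nat.cast_nonneg k : (0 : ℝ) ≤ k)
      simp only [hh, hk.ne', if_false, Nat.succ_ne_zero]
      push_cast
      linarith
  simp only [Fin.sum_univ_succ (n := M + 1), Fin.cons_zero, Fin.cons_succ, p,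
    Fin.val_zero, Fin.val_succ] at main
  have hd : ∀ i j : Fin (M + 1), h (Nat.dist (i + 1) (j + 1)) =
      |((j : ℕ) + 1 : ℝ) - ((i : ℕ) + 1)| ^ s + if i = j then 2 - 2 ^ s else 0 := by
    intro i j
    by_cases hij : i = j
    · subst hij
      simp [hh, hs0.ne']
    · have hne : Nat.dist (i + 1) (j + 1) ≠ 0 := fun h0 => hij (by
        have := Nat.eq_of_dist_eq_zero h0
        ext
        omega)
      simp only [hh, hne, if_false, hij, natCast_dist]
      push_cast
      simp
  have h0l : ∀ j : Fin (M + 1), h (Nat.dist 0 (j + 1)) = ((j : ℕ) + 1 : ℝ) ^ s := by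
    intro j
    simp [hh, Nat.dist]
  have h0r : ∀ j : Fin (M + 1), h (Nat.dist (j + 1) 0) = ((j : ℕ) + 1 : ℝ) ^ s := by
    intro j
    simp [hh, Nat.dist]
  have h00 : h (Nat.dist 0 0) = 2 - 2 ^ s := by simp [hh, Nat.dist]
  simp only [hd, h0l, h0r, h00, mul_add, Finset.sum_add_distrib, mul_ite, mul_zero,
    Finset.sum_ite_eq, Finset.mem_univ, if_true] at main
  set S := ∑ i, a i with hS
  set T := ∑ i : Fin (M + 1), a i * ((i : ℕ) + 1 : ℝ) ^ s with hT
  have e1 : ∑ j : Fin (M + 1), -S * a j * ((j : ℕ) + 1 : ℝ) ^ s = -S * T := by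
    rw [hT, Finset.mul_sum]
    exact Finset.sum_congr rfl fun _ _ => by ring
  have e2 : ∑ j : Fin (M + 1), a j * -S * ((j : ℕ) + 1 : ℝ) ^ s = -S * T := by
    rw [hT, Finset.mul_sum]
    exact Finset.sum_congr rfl fun _ _ => by ring
  have e3 : ∑ i, a i * a i * (2 - 2 ^ s) = (2 - 2 ^ s) * ∑ i, a i ^ 2 := by
    rw [Finset.mul_sum]
    exact Finset.sum_congr rfl fun _ _ => by ring
  have e4 : ∑ i, ∑ j, a i * a j * ((((i : ℕ) + 1 : ℝ) ^ s + ((j : ℕ) + 1 : ℝ) ^ s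
      - |((j : ℕ) + 1 : ℝ) - ((i : ℕ) + 1)| ^ s) / 2) = (T * S + S * T
      - ∑ i, ∑ j, a i * a j * |((j : ℕ) + 1 : ℝ) - ((i : ℕ) + 1)| ^ s) / 2 := by
    rw [hT, hS, Finset.sum_mul_sum, Finset.sum_mul_sum, ← Finset.sum_add_distrib,
      ← Finset.sum_sub_distrib, Finset.sum_div]
    refine Finset.sum_congr rfl fun i _ => ?_
    rw [← Finset.sum_add_distrib, ← Finset.sum_sub_distrib, Finset.sum_div]
    exact Finset.sum_congr rfl fun _ _ => by ring
  rw [e1, e2, e3] at main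
  rw [e4]
  have := mul_nonneg (mul_self_nonneg S) (sub_nonneg.2 h2s')
  linarith

lemma integrable_iSup_of_finite_s17 {Ω ι : Type*} [MeasurableSpace Ω] {μ : Measure Ω} [Fintype ι]
    [Nonempty ι] {f : ι → Ω → ℝ} (hf : ∀ i, Integrable (f i) μ) :
    Integrable (fun ω => ⨆ i, f i ω) μ := by
  have : (fun ω => ⨆ i, f i ω) = Finset.univ.sup' Finset.univ_nonempty f := by
    ext ω
    rw [Finset.sup'_apply, Finset.sup'_univ_eq_ciSup]
  rw [this]
  exact Finset.sup'_induction (p := fun g => Integrable g μ) _ _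
    (fun _ h₁ _ h₂ => h₁.sup h₂) fun i _ => hf i

lemma integral_Ioi_gaussianReal (t : ℝ) :
    ∫ x in Ioi t, x ∂(gaussianReal 0 1) = gaussianPDFReal 0 1 t := by
  have hder : ∀ x : ℝ, HasDerivAt (fun x => -gaussianPDFReal 0 1 x)
      (gaussianPDFReal 0 1 x * x) x := by
    intro x
    have h : HasDerivAt (fun x : ℝ => -((√(2 * π))⁻¹ * rexp (-x ^ 2 / 2)))
        (-((√(2 * π))⁻¹ * (rexp (-x ^ 2 / 2) * (-(2 * x) / 2)))) x := by
      refine HasDerivAt.neg (HasDerivAt.const_mul _ (HasDerivAt.exp ?_))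
      simpa using ((hasDerivAt_pow 2 x).neg).div_const 2
    have e : (fun x => -gaussianPDFReal 0 1 x) =
        fun x : ℝ => -((√(2 * π))⁻¹ * rexp (-x ^ 2 / 2)) := by
      ext y
      simp [gaussianPDFReal]
    rw [e]
    convert! h using 1
    simp [gaussianPDFReal]
    ring
  have hinteg : Integrable (fun x => gaussianPDFReal 0 1 x * x) := by
    have h1 : Integrable (fun x : ℝ => x) (gaussianReal 0 1) :=
      (memLp_id_gaussianReal 1).integrable (by simp)
    rw [gaussianReal_of_var_ne_zero _ one_ne_zero,
      integrable_withDensity_iff_integrable_smul' (measurable_gaussianPDF 0 1)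
        (Filter.Eventually.of_forall fun _ => gaussianPDF_lt_top)] at h1
    simpa [toReal_gaussianPDF] using h1
  have htend : Tendsto (fun x => -gaussianPDFReal 0 1 x) atTop (𝓝 0) := by
    have h0 : Tendsto (fun x : ℝ => -x ^ 2 / 2) atTop atBot := by
      have := (tendsto_pow_atTop (α := ℝ) (n := 2) two_ne_zero).const_mul_atTop
        (show (0 : ℝ) < 1 / 2 by norm_num)
      have := tendsto_neg_atTop_atBot.comp this
      refine this.congr fun x => ?_
      simp only [Function.comp]
      ring
    have := ((Real.tendsto_exp_atBot.comp h0).const_mul ((√(2 * π))⁻¹)).neg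
    rw [mul_zero, neg_zero] at this
    refine this.congr fun x => ?_
    simp [gaussianPDFReal]
  rw [← integral_indicator measurableSet_Ioi,
    integral_gaussianReal_eq_integral_smul one_ne_zero]
  have e : (fun x => gaussianPDFReal 0 1 x • (Ioi t).indicator (fun x => x) x) =
      (Ioi t).indicator (fun x => gaussianPDFReal 0 1 x * x) := by
    ext x
    by_cases hx : x ∈ Ioi t <;> simp [hx]
  rw [e, integral_indicator measurableSet_Ioi,
    integral_Ioi_of_hasDerivAt_of_tendsto (hder t).continuousAt.continuousWithinAt
      (fun x _ => hder x) hinteg.integrableOn htend]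
  ring

lemma gaussianReal_real_Ioi_le {t : ℝ} (ht : 0 < t) :
    (gaussianReal 0 1).real (Ioi t) ≤ gaussianPDFReal 0 1 t / t := by
  rw [le_div_iff₀ ht, ← integral_Ioi_gaussianReal t]
  have h1 : Integrable (fun x : ℝ => x) (gaussianReal 0 1) :=
    (memLp_id_gaussianReal 1).integrable (by simp)
  have h := setIntegral_mono_on (μ := gaussianReal 0 1) (s := Ioi t) (f := fun _ => t)
    (g := fun x => x) (integrable_const t).integrableOn h1.integrableOn measurableSet_Ioi
    fun x hx => hx.le
  simpa using h

lemma integrable_eval_pi_gaussianReal {ι : Type*} [Fintype ι] (i : ι) :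
    Integrable (fun x : ι → ℝ => x i) (Measure.pi fun _ : ι => gaussianReal 0 1) :=
  integrable_eval ((memLp_id_gaussianReal 1).integrable (by simp))

lemma integral_eval_pi_gaussianReal {ι : Type*} [Fintype ι] (i : ι) :
    ∫ x : ι → ℝ, x i ∂(Measure.pi fun _ : ι => gaussianReal 0 1) = 0 := by
  rw [integral_eval]
  simp

/-- One step of the recursion for the expected maximum of independent standard Gaussians:
the new variable is kept if and only if it exceeds `t`. -/
lemma integral_iSup_pi_gaussianReal_succ (k : ℕ) (t : ℝ) :
    gaussianPDFReal 0 1 t + (1 - (gaussianReal 0 1).real (Ioi t)) *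
      ∫ x, (⨆ i : Fin (k + 1), x i) ∂(Measure.pi fun _ : Fin (k + 1) => gaussianReal 0 1) ≤
    ∫ x, (⨆ i : Fin (k + 2), x i) ∂(Measure.pi fun _ : Fin (k + 2) => gaussianReal 0 1) := by
  set γ := gaussianReal 0 1 with hγ
  have hmp := (measurePreserving_piFinSuccAbove (fun _ : Fin (k + 2) => γ) 0).symm
  rw [← hmp.integral_comp']
  set G : (Fin (k + 1) → ℝ) → ℝ := fun x => ⨆ i, x i with hG
  have hGint : Integrable G (Measure.pi fun _ : Fin (k + 1) => γ) :=
    integrable_iSup_of_finite_s17 fun i => integrable_eval_pi_gaussianReal i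
  have hid : Integrable (fun x : ℝ => x) γ := (memLp_id_gaussianReal 1).integrable (by simp)
  have hi1 : Integrable (fun z : ℝ × (Fin (k + 1) → ℝ) => (Ioi t).indicator (fun x => x) z.1 * 1)
      (γ.prod (Measure.pi fun _ : Fin (k + 1) => γ)) :=
    (hid.indicator measurableSet_Ioi).mul_prod (integrable_const 1)
  have hi2 : Integrable (fun z : ℝ × (Fin (k + 1) → ℝ) =>
      (Ioi t)ᶜ.indicator (fun _ => (1 : ℝ)) z.1 * G z.2)
      (γ.prod (Measure.pi fun _ : Fin (k + 1) => γ)) :=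
    ((integrable_const 1).indicator measurableSet_Ioi.compl).mul_prod hGint
  have e : gaussianPDFReal 0 1 t + (1 - γ.real (Ioi t)) *
      ∫ x, G x ∂(Measure.pi fun _ : Fin (k + 1) => γ) =
      ∫ z : ℝ × (Fin (k + 1) → ℝ), ((Ioi t).indicator (fun x => x) z.1 * 1 +
        (Ioi t)ᶜ.indicator (fun _ => (1 : ℝ)) z.1 * G z.2)
        ∂(γ.prod (Measure.pi fun _ : Fin (k + 1) => γ)) := by
    rw [integral_add hi1 hi2, integral_prod_mul, integral_prod_mul (Set.indicator _ _) fun _ => 1,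
      integral_indicator measurableSet_Ioi, hγ, integral_Ioi_gaussianReal,
      integral_indicator measurableSet_Ioi.compl]
    rw [← probReal_compl_eq_one_sub measurableSet_Ioi]
    simp
  rw [e]
  refine integral_mono (hi1.add hi2) ?_ ?_
  · exact (hmp.integrable_comp_emb (MeasurableEquiv.measurableEmbedding _)).2
      (integrable_iSup_of_finite_s17 fun i => integrable_eval_pi_gaussianReal i)
  · rintro ⟨x, y⟩
    have hb : BddAbove (Set.range fun i : Fin (k + 2) =>
        ((MeasurableEquiv.piFinSuccAbove (fun _ : Fin (k + 2) => ℝ) 0).symm (x, y)) i) :=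
      (Set.finite_range _).bddAbove
    by_cases hx : x ∈ Ioi t
    · simp only [hx, indicator_of_mem, mul_one, mem_compl_iff, not_true, not_false_eq_true,
        indicator_of_notMem, zero_mul, add_zero]
      exact le_ciSup hb 0
    · simp only [hx, indicator_of_mem, mem_compl_iff, not_false_eq_true,
        indicator_of_notMem, zero_mul, zero_add, one_mul]
      exact ciSup_le fun i => le_ciSup hb (Fin.succ i)

/-- A lower bound for the expected maximum of `k + 1` independent standard Gaussians. -/
lemma integral_iSup_pi_gaussianReal_ge {t : ℝ} (ht : 0 < t) (hq : gaussianPDFReal 0 1 t ≤ t)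
    (k : ℕ) :
    t * (1 - (1 - gaussianPDFReal 0 1 t / t) ^ k) ≤
      ∫ x, (⨆ i : Fin (k + 1), x i) ∂(Measure.pi fun _ : Fin (k + 1) => gaussianReal 0 1) := by
  have ht' : gaussianPDFReal 0 1 t = t * (gaussianPDFReal 0 1 t / t) := by field_simp
  have hp := gaussianReal_real_Ioi_le ht
  have hq1 : gaussianPDFReal 0 1 t / t ≤ 1 := (div_le_one ht).2 hq
  have hq0 : 0 ≤ gaussianPDFReal 0 1 t / t := div_nonneg (gaussianPDFReal_nonneg _ _ _) ht.le
  set q := gaussianPDFReal 0 1 t / t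
  induction k with
  | zero => simp [integral_eval_pi_gaussianReal]
  | succ k ih =>
    refine le_trans ?_ (integral_iSup_pi_gaussianReal_succ k t)
    have hr : 0 ≤ t * (1 - (1 - q) ^ k) :=
      mul_nonneg ht.le (sub_nonneg.2 (pow_le_one₀ (by linarith) (by linarith)))
    have h1 := mul_le_mul_of_nonneg_right (sub_le_sub_left hp 1) hr
    have h2 := mul_le_mul_of_nonneg_left ih
      (sub_nonneg.2 (measureReal_le_one (μ := gaussianReal 0 1) (s := Ioi t)))
    have h3 : t * (1 - (1 - q) ^ (k + 1)) = gaussianPDFReal 0 1 t +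
        (1 - q) * (t * (1 - (1 - q) ^ k)) := by
      rw [ht']
      ring
    linarith

/-- Every linear combination of the measurable random variables `X i` is a centered Gaussian. -/
structure IsCenteredGaussianFamily {Ω ι : Type*} [MeasurableSpace Ω] [Fintype ι] (μ : Measure Ω)
    (X : ι → Ω → ℝ) : Prop where
  measurable : ∀ i, Measurable (X i)
  map_sum : ∀ c : ι → ℝ, ∃ v : NNReal, μ.map (fun ω => ∑ i, c i * X i ω) = gaussianReal 0 v

namespace IsCenteredGaussianFamily

variable {Ω ι : Type*} [MeasurableSpace Ω] [Fintype ι] {μ : Measure Ω} {X : ι → Ω → ℝ}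

lemma memLp_two (hX : IsCenteredGaussianFamily μ X) (i : ι) : MemLp (X i) 2 μ := by
  classical
  obtain ⟨v, hv⟩ := hX.map_sum (Pi.single i 1)
  have e : (fun ω => ∑ j, (Pi.single i 1 : ι → ℝ) j * X j ω) = X i := by
    ext ω
    simp [Pi.single_apply]
  rw [e] at hv
  have h := memLp_id_gaussianReal (μ := 0) (v := v) 2
  rw [← hv] at h
  exact (memLp_map_measure_iff (by fun_prop) (hX.measurable i).aemeasurable).1 h

lemma integrable [IsFiniteMeasure μ] (hX : IsCenteredGaussianFamily μ X) (i : ι) :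
    Integrable (X i) μ :=
  (hX.memLp_two i).integrable (by norm_num)

lemma charFun_map [IsFiniteMeasure μ] (hX : IsCenteredGaussianFamily μ X)
    (t : EuclideanSpace ℝ ι) :
    charFun (μ.map fun ω => WithLp.toLp 2 fun i => X i ω) t =
      Complex.exp (-((∑ i, ∑ j, t i * t j * ∫ ω, X i ω * X j ω ∂μ : ℝ) : ℂ) / 2) := by
  obtain ⟨v, hv⟩ := hX.map_sum t
  have hmX := hX.measurable
  have hm : Measurable fun ω => ∑ i, t i * X i ω := by fun_prop
  have hm' : Measurable fun ω => WithLp.toLp 2 fun i => X i ω := by fun_prop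
  have hvar : (v : ℝ) = ∑ i, ∑ j, t i * t j * ∫ ω, X i ω * X j ω ∂μ := by
    have h1 : ∫ x, x ^ 2 ∂(gaussianReal 0 v) = v := by
      have := variance_id_gaussianReal (μ := 0) (v := v)
      rw [variance_eq_integral (by fun_prop)] at this
      simpa using this
    rw [← h1, ← hv, integral_map hm.aemeasurable (by fun_prop)]
    simp_rw [sq, Finset.sum_mul_sum]
    have hi : ∀ i j, Integrable (fun ω => t i * X i ω * (t j * X j ω)) μ := fun i j => by
      have := ((hX.memLp_two i).integrable_mul (hX.memLp_two j)).const_mul (t i * t j)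
      refine this.congr (Filter.Eventually.of_forall fun ω => ?_)
      simp only [Pi.mul_apply]
      ring
    rw [integral_finsetSum _ fun i _ => integrable_finsetSum _ fun j _ => hi i j]
    refine Finset.sum_congr rfl fun i _ => ?_
    rw [integral_finsetSum _ fun j _ => hi i j]
    refine Finset.sum_congr rfl fun j _ => ?_
    rw [← integral_const_mul]
    exact integral_congr_ae (Filter.Eventually.of_forall fun ω => by simp only; ring)
  have h2 := charFun_gaussianReal (μ := 0) (v := v) 1
  rw [← hv, charFun_apply, integral_map hm.aemeasurable (by fun_prop)] at h2
  rw [charFun_apply, integral_map hm'.aemeasurable (by fun_prop), ← hvar]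
  convert! h2 using 2
  · ext ω
    simp [PiLp.inner_apply]
  · simp [neg_div]

end IsCenteredGaussianFamily

lemma integrable_iSup_add_of_isGaussian {ι : Type*} [Fintype ι] [Nonempty ι]
    (P : Measure (EuclideanSpace ℝ ι)) [IsGaussian P] (z : EuclideanSpace ℝ ι) :
    Integrable (fun y : EuclideanSpace ℝ ι => ⨆ i, (z + y) i) P :=
  integrable_iSup_of_finite_s17 fun i =>
    (integrable_const (z i)).add (IsGaussian.integrable_dual P (EuclideanSpace.proj i))

/-- A Gaussian vector whose covariance matrix dominates `σ²` times the identity has an expected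
maximum at least `σ` times that of independent standard Gaussians. -/
lemma IsCenteredGaussianFamily.mul_integral_iSup_pi_le {Ω ι : Type*} [MeasurableSpace Ω]
    [Fintype ι] [Nonempty ι] {μ : Measure Ω} [IsProbabilityMeasure μ] {X : ι → Ω → ℝ}
    (hX : IsCenteredGaussianFamily μ X) {σ : ℝ} (hσ : 0 ≤ σ)
    (hcov : ∀ c : ι → ℝ, σ ^ 2 * ∑ i, c i ^ 2 ≤
      ∑ i, ∑ j, c i * c j * ∫ ω, X i ω * X j ω ∂μ) :
    σ * ∫ x, (⨆ i, x i) ∂(Measure.pi fun _ : ι => gaussianReal 0 1) ≤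
      ∫ ω, (⨆ i, X i ω) ∂μ := by
  classical
  set A : Matrix ι ι ℝ := Matrix.of (fun i j => ∫ ω, X i ω * X j ω ∂μ) - σ ^ 2 • 1 with hA
  have hquad : ∀ c : ι → ℝ, c ⬝ᵥ A.mulVec c =
      ∑ i, ∑ j, c i * c j * ∫ ω, X i ω * X j ω ∂μ - σ ^ 2 * ∑ i, c i ^ 2 := by
    intro c
    simp only [hA, Matrix.sub_mulVec, dotProduct_sub, Matrix.smul_mulVec, Matrix.one_mulVec,
      dotProduct_smul, smul_eq_mul]
    congr 1
    · simp only [dotProduct, Matrix.mulVec, Matrix.of_apply, Finset.mul_sum]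
      exact Finset.sum_congr rfl fun _ _ => Finset.sum_congr rfl fun _ _ => by ring
    · simp only [dotProduct, sq]
  have hpsd : A.PosSemidef := by
    refine Matrix.PosSemidef.of_dotProduct_mulVec_nonneg ?_ fun c => ?_
    · ext i j
      simp [hA, Matrix.one_apply, mul_comm, eq_comm]
    · simp only [star_trivial, hquad]
      exact sub_nonneg.2 (hcov c)
  have hmX := hX.measurable
  have hm' : Measurable fun ω => WithLp.toLp 2 fun i => X i ω := by fun_prop
  set ν := (stdGaussian (EuclideanSpace ℝ ι)).map (fun x => σ • x) with hν
  have : IsProbabilityMeasure ν := Measure.isProbabilityMeasure_map (by fun_prop)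
  have : IsProbabilityMeasure (μ.map fun ω => WithLp.toLp 2 fun i => X i ω) :=
    Measure.isProbabilityMeasure_map (by fun_prop)
  have hlaw : (μ.map fun ω => WithLp.toLp 2 fun i => X i ω) =
      ν.conv (multivariateGaussian 0 A) := by
    refine Measure.ext_of_charFun (funext fun t => ?_)
    rw [hX.charFun_map, charFun_conv, hν, charFun_map_smul, charFun_stdGaussian,
      charFun_multivariateGaussian hpsd, hquad, ← Complex.exp_add]
    congr 1
    have hn : ‖σ • t‖ ^ 2 = σ ^ 2 * ∑ i, t i ^ 2 := by
      rw [norm_smul, mul_pow, EuclideanSpace.norm_sq_eq]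
      simp
    rw [← Complex.ofReal_pow, hn]
    simp only [inner_zero_right]
    push_cast
    ring
  have hmeas : Measurable fun y : EuclideanSpace ℝ ι => ⨆ i, y i :=
    Measurable.iSup fun i => by fun_prop
  have hinteg : Integrable (fun y : EuclideanSpace ℝ ι => ⨆ i, y i)
      (μ.map fun ω => WithLp.toLp 2 fun i => X i ω) :=
    (integrable_map_measure hmeas.aestronglyMeasurable hm'.aemeasurable).2
      (integrable_iSup_of_finite_s17 hX.integrable)
  have hR : ∫ ω, (⨆ i, X i ω) ∂μ =
      ∫ z, ∫ y, (⨆ i, (z + y) i) ∂(multivariateGaussian 0 A) ∂ν := by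
    rw [← integral_conv (f := fun y : EuclideanSpace ℝ ι => ⨆ i, y i) (hlaw ▸ hinteg), ← hlaw,
      integral_map hm'.aemeasurable hmeas.aestronglyMeasurable]
  have hL : σ * ∫ x, (⨆ i, x i) ∂(Measure.pi fun _ : ι => gaussianReal 0 1) =
      ∫ z : EuclideanSpace ℝ ι, (⨆ i, z i) ∂ν := by
    have hmeas' : Measurable fun y : EuclideanSpace ℝ ι => ⨆ i, (σ • y) i :=
      Measurable.iSup fun i => by fun_prop
    rw [hν, integral_map (by fun_prop) hmeas.aestronglyMeasurable, ← map_pi_eq_stdGaussian,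
      integral_map (by fun_prop) hmeas'.aestronglyMeasurable,
      ← integral_const_mul]
    refine integral_congr_ae (Filter.Eventually.of_forall fun x => ?_)
    simp [Real.mul_iSup_of_nonneg hσ]
  rw [hR, hL]
  have : IsGaussian ν :=
    isGaussian_map (μ := stdGaussian (EuclideanSpace ℝ ι)) (σ • ContinuousLinearMap.id ℝ _)
  rw [hlaw] at hinteg
  have hprod := (integrable_map_measure hinteg.aestronglyMeasurable (by fun_prop)).1 hinteg
  refine integral_mono ?_ hprod.integral_prod_left fun z => ?_
  · simpa using integrable_iSup_add_of_isGaussian ν 0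
  · refine ciSup_le fun i => ?_
    have hz : z i = ∫ y, (z + y) i ∂(multivariateGaussian 0 A) := by
      have h0 := IsGaussian.integral_dual (μ := multivariateGaussian 0 A)
        (EuclideanSpace.proj i)
      rw [integral_id_multivariateGaussian, map_zero] at h0
      have h1 := integral_add (integrable_const (z i))
        (IsGaussian.integrable_dual (multivariateGaussian 0 A) (EuclideanSpace.proj i))
      rw [h0] at h1
      simpa using h1.symm
    rw [hz]
    refine integral_mono ?_ (integrable_iSup_add_of_isGaussian _ z) fun y => ?_
    · exact (integrable_const (z i)).add
        (IsGaussian.integrable_dual (multivariateGaussian 0 A) (EuclideanSpace.proj i))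
    · exact le_ciSup (f := fun i => (z + y) i) (Set.finite_range _).bddAbove i

lemma integral_abs_gaussianReal (v : NNReal) :
    ∫ x, |x| ∂(gaussianReal 0 v) = √v * (2 * gaussianPDFReal 0 1 0) := by
  have hid : Integrable (fun x : ℝ => x) (gaussianReal 0 1) :=
    (memLp_id_gaussianReal 1).integrable (by simp)
  have h1 : ∫ x, |x| ∂(gaussianReal 0 1) = 2 * gaussianPDFReal 0 1 0 := by
    have e : (fun x : ℝ => |x|) = fun x => 2 * (Ioi 0).indicator (fun x => x) x - x := by
      ext x
      by_cases hx : 0 < x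
      · simp [hx, abs_of_pos hx]
        ring
      · simp [hx, abs_of_nonpos (not_lt.1 hx)]
    rw [e, integral_sub ((hid.indicator measurableSet_Ioi).const_mul 2) hid, integral_const_mul,
      integral_indicator measurableSet_Ioi, integral_Ioi_gaussianReal]
    simp
  have h2 : gaussianReal 0 v = (gaussianReal 0 1).map (fun x => √v * x) := by
    rw [gaussianReal_map_const_mul]
    congr 1
    · simp
    · ext
      simp
  rw [h2, integral_map (by fun_prop) (by fun_prop)]
  simp_rw [abs_mul, abs_of_nonneg (Real.sqrt_nonneg _)]
  rw [integral_const_mul, h1]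

namespace IsCenteredGaussianFamily

variable {Ω ι κ : Type*} [MeasurableSpace Ω] [Fintype ι] [Fintype κ] {μ : Measure Ω}
  {X : ι → Ω → ℝ}

lemma neg (hX : IsCenteredGaussianFamily μ X) :
    IsCenteredGaussianFamily μ (fun i ω => -X i ω) where
  measurable i := (hX.measurable i).neg
  map_sum c := by
    obtain ⟨v, hv⟩ := hX.map_sum (-c)
    exact ⟨v, by simpa using hv⟩

lemma integral_iSup_neg [IsProbabilityMeasure μ] (hX : IsCenteredGaussianFamily μ X) :
    ∫ ω, (⨆ i, -X i ω) ∂μ = ∫ ω, (⨆ i, X i ω) ∂μ := by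
  have hmX := hX.measurable
  have hm : Measurable fun ω => WithLp.toLp 2 fun i => X i ω := by fun_prop
  have hm' : Measurable fun ω => WithLp.toLp 2 fun i => -X i ω := by fun_prop
  have hmeas : Measurable fun y : EuclideanSpace ℝ ι => ⨆ i, y i :=
    Measurable.iSup fun i => by fun_prop
  have hlaw : (μ.map fun ω => WithLp.toLp 2 fun i => -X i ω) =
      μ.map fun ω => WithLp.toLp 2 fun i => X i ω := by
    have := Measure.isProbabilityMeasure_map (μ := μ) hm.aemeasurable
    have := Measure.isProbabilityMeasure_map (μ := μ) hm'.aemeasurable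
    refine Measure.ext_of_charFun (funext fun t => ?_)
    rw [hX.charFun_map, hX.neg.charFun_map]
    simp
  have h := integral_map hm.aemeasurable (μ := μ) hmeas.aestronglyMeasurable
  have h' := integral_map hm'.aemeasurable (μ := μ) hmeas.aestronglyMeasurable
  rw [hlaw] at h'
  exact h'.symm.trans h

lemma integral_abs_sub [IsProbabilityMeasure μ] (hX : IsCenteredGaussianFamily μ X) (i j : ι) :
    ∫ ω, |X i ω - X j ω| ∂μ =
      √(∫ ω, (X i ω - X j ω) ^ 2 ∂μ) * (2 * gaussianPDFReal 0 1 0) := by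
  classical
  obtain ⟨v, hv⟩ := hX.map_sum (Pi.single i 1 - Pi.single j 1)
  have hmX := hX.measurable
  have e : (fun ω => ∑ l, (Pi.single i 1 - Pi.single j 1 : ι → ℝ) l * X l ω) =
      fun ω => X i ω - X j ω := by
    ext ω
    simp [Pi.single_apply, sub_mul]
  have hm : Measurable fun ω => X i ω - X j ω := by fun_prop
  rw [e] at hv
  have h1 : ∫ x, x ^ 2 ∂(gaussianReal 0 v) = v := by
    have := variance_id_gaussianReal (μ := 0) (v := v)
    rw [variance_eq_integral (by fun_prop)] at this
    simpa using this
  rw [← integral_map (f := fun x => |x|) hm.aemeasurable (by fun_prop),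
    ← integral_map (f := fun x => x ^ 2) hm.aemeasurable (by fun_prop), hv, h1,
    integral_abs_gaussianReal]

/-- The expected maximum of three centered Gaussian variables is bounded below by
`(2 √(2 π))⁻¹` times the sum of their mutual `L²` distances. -/
lemma integral_iSup_ge_three [IsProbabilityMeasure μ] (hX : IsCenteredGaussianFamily μ X)
    (i j k : ι) :
    gaussianPDFReal 0 1 0 / 2 * (√(∫ ω, (X i ω - X j ω) ^ 2 ∂μ) +
      √(∫ ω, (X j ω - X k ω) ^ 2 ∂μ) + √(∫ ω, (X i ω - X k ω) ^ 2 ∂μ)) ≤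
      ∫ ω, (⨆ i, X i ω) ∂μ := by
  have : Nonempty ι := ⟨i⟩
  have hinteg : ∀ a b, Integrable (fun ω => |X a ω - X b ω|) μ := fun a b =>
    ((hX.integrable a).sub (hX.integrable b)).abs
  have h1 : Integrable (fun ω => ⨆ i, X i ω) μ := integrable_iSup_of_finite_s17 hX.integrable
  have h2 : Integrable (fun ω => ⨆ i, -X i ω) μ := integrable_iSup_of_finite_s17 hX.neg.integrable
  have key : ∫ ω, (|X i ω - X j ω| + |X j ω - X k ω| + |X i ω - X k ω|) ∂μ ≤
      ∫ ω, 2 * ((⨆ i, X i ω) + ⨆ i, -X i ω) ∂μ := by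
    refine integral_mono (((hinteg i j).add (hinteg j k)).add (hinteg i k)) ((h1.add h2).const_mul 2)
      fun ω => ?_
    have u : ∀ l, X l ω ≤ ⨆ i, X i ω := le_ciSup (Set.finite_range _).bddAbove
    have w : ∀ l, -X l ω ≤ ⨆ i, -X i ω := le_ciSup (Set.finite_range _).bddAbove
    have ui := u i
    have uj := u j
    have uk := u k
    have wi := w i
    have wj := w j
    have wk := w k
    rcases abs_cases (X i ω - X j ω) with h1 | h1 <;>
      rcases abs_cases (X j ω - X k ω) with h2 | h2 <;> rcases abs_cases (X i ω - X k ω) with h3 | h3 <;>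
      simp only [h1.1, h2.1, h3.1] <;> linarith
  have e1 : Integrable (fun ω => |X i ω - X j ω| + |X j ω - X k ω|) μ :=
    (hinteg i j).add (hinteg j k)
  rw [integral_const_mul, integral_add h1 h2, hX.integral_iSup_neg,
    integral_add e1 (hinteg i k), integral_add (hinteg i j) (hinteg j k),
    hX.integral_abs_sub, hX.integral_abs_sub, hX.integral_abs_sub] at key
  linarith

lemma comp (hX : IsCenteredGaussianFamily μ X) (g : κ → ι) :
    IsCenteredGaussianFamily μ (fun l => X (g l)) where
  measurable l := hX.measurable (g l)
  map_sum c := by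
    classical
    obtain ⟨v, hv⟩ := hX.map_sum fun i => ∑ l, if g l = i then c l else 0
    refine ⟨v, hv ▸ ?_⟩
    congr 1
    ext ω
    simp_rw [Finset.sum_mul]
    rw [Finset.sum_comm]
    simp

lemma integral_iSup_comp_le [Nonempty κ] [IsProbabilityMeasure μ]
    (hX : IsCenteredGaussianFamily μ X) (g : κ → ι) :
    ∫ ω, (⨆ l, X (g l) ω) ∂μ ≤ ∫ ω, (⨆ i, X i ω) ∂μ := by
  have : Nonempty ι := .map g inferInstance
  refine integral_mono (integrable_iSup_of_finite_s17 (hX.comp g).integrable)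
    (integrable_iSup_of_finite_s17 hX.integrable) fun ω => ?_
  exact ciSup_le fun l => le_ciSup (f := fun i => X i ω) (Set.finite_range _).bddAbove (g l)

end IsCenteredGaussianFamily

namespace IsFBM

variable {Ω : Type} [MeasurableSpace Ω] {μ : Measure Ω} {H : ℝ} {B : ℝ → Ω → ℝ}

lemma isCenteredGaussianFamily (hB : IsFBM μ H B) {k : ℕ} {t : Fin k → ℝ} (ht : ∀ i, 0 ≤ t i) :
    IsCenteredGaussianFamily μ (fun i => B (t i)) where
  measurable i := hB.1.1 _ (ht i)
  map_sum c := hB.1.2 k c t ht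

lemma sqrt_integral_sq_sub (hB : IsFBM μ H B) (hH : 0 < H) {k : ℕ} {t : Fin k → ℝ}
    (ht : ∀ i, 0 ≤ t i) (i j : Fin k) :
    √(∫ ω, (B (t i) ω - B (t j) ω) ^ 2 ∂μ) = |t i - t j| ^ H := by
  have hL := (hB.isCenteredGaussianFamily ht).memLp_two
  have hinteg : ∀ a b, Integrable (fun ω => B (t a) ω * B (t b) ω) μ := fun a b =>
    (hL a).integrable_mul (hL b)
  have hc := hB.2.2.2
  have e : ∀ ω, (B (t i) ω - B (t j) ω) ^ 2 =
      B (t i) ω * B (t i) ω + B (t j) ω * B (t j) ω - 2 * (B (t i) ω * B (t j) ω) :=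
    fun ω => by ring
  have h2 : Integrable (fun ω => B (t i) ω * B (t i) ω + B (t j) ω * B (t j) ω) μ :=
    (hinteg i i).add (hinteg j j)
  have h0 : (0 : ℝ) ^ (2 * H) = 0 := Real.zero_rpow (by positivity)
  simp_rw [e]
  rw [integral_sub h2 ((hinteg i j).const_mul 2),
    integral_add (hinteg i i) (hinteg j j), integral_const_mul, hc _ _ (ht i) (ht i),
    hc _ _ (ht j) (ht j), hc _ _ (ht i) (ht j), sub_self, sub_self, abs_zero, h0,
    abs_sub_comm (t j)]
  rw [show (t i ^ (2 * H) + t i ^ (2 * H) - 0) / 2 + (t j ^ (2 * H) + t j ^ (2 * H) - 0) / 2 -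
      2 * ((t i ^ (2 * H) + t j ^ (2 * H) - |t i - t j| ^ (2 * H)) / 2) =
      |t i - t j| ^ (2 * H) by ring, mul_comm, Real.rpow_mul (abs_nonneg _), Real.rpow_two,
    Real.sqrt_sq (by positivity)]

lemma three_le_expMaxGrid [IsProbabilityMeasure μ] (hB : IsFBM μ H B) (hH : 0 < H) {k n : ℕ}
    (hn : 0 < n) (hk : k ≤ n) :
    gaussianPDFReal 0 1 0 / 2 * ((k / n : ℝ) ^ H + (1 - k / n : ℝ) ^ H + 1) ≤
      expMaxGrid μ B n := by
  have ht : ∀ i : Fin (n + 1), (0 : ℝ) ≤ (i : ℕ) / n := fun i => by positivity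
  have h := (hB.isCenteredGaussianFamily ht).integral_iSup_ge_three 0
    ⟨k, Nat.lt_succ_of_le hk⟩ (Fin.last n)
  have hn' : (n : ℝ) ≠ 0 := by positivity
  have hk' : (k / n : ℝ) ≤ 1 := div_le_one_of_le₀ (by exact_mod_cast hk) (by positivity)
  rw [hB.sqrt_integral_sq_sub hH ht, hB.sqrt_integral_sq_sub hH ht,
    hB.sqrt_integral_sq_sub hH ht] at h
  have e1 : |(k / n : ℝ) - 1| = 1 - k / n := by
    rw [abs_sub_comm, abs_of_nonneg (by linarith)]
  have e2 : |(k / n : ℝ)| = k / n := abs_of_nonneg (by positivity)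
  simpa [hn', e1, e2, expMaxGrid] using h

lemma expMaxGrid_nonneg_s17 [IsProbabilityMeasure μ] (hB : IsFBM μ H B) (hH : 0 < H) {n : ℕ}
    (hn : 0 < n) : 0 ≤ expMaxGrid μ B n := by
  refine le_trans ?_ (hB.three_le_expMaxGrid hH hn le_rfl)
  have := gaussianPDFReal_nonneg 0 1 0
  have hn' : (n : ℝ) ≠ 0 := by positivity
  rw [div_self hn', sub_self]
  positivity

lemma spaced_le_expMaxGrid [IsProbabilityMeasure μ] (hB : IsFBM μ H B) (hH : 0 < H)
    (hH' : 2 * H ≤ 1) {m d n : ℕ} (hn : 0 < n) (h : (m + 1) * d ≤ n) {t : ℝ} (ht : 0 < t)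
    (hq : gaussianPDFReal 0 1 t ≤ t) :
    (d / n : ℝ) ^ H * √((2 - 2 ^ (2 * H)) / 2) *
      (t * (1 - (1 - gaussianPDFReal 0 1 t / t) ^ m)) ≤ expMaxGrid μ B n := by
  have htn : ∀ i : Fin (n + 1), (0 : ℝ) ≤ (i : ℕ) / n := fun i => by positivity
  have htd : ∀ i : Fin (m + 1), (0 : ℝ) ≤ ((i : ℕ) + 1) * (d / n) := fun i => by positivity
  have hX := hB.isCenteredGaussianFamily htn
  have hlt : ∀ i : Fin (m + 1), ((i : ℕ) + 1) * d < n + 1 := fun i =>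
    Nat.lt_succ_of_le ((Nat.mul_le_mul_right d i.2).trans h)
  have hsub := hX.integral_iSup_comp_le fun i : Fin (m + 1) => ⟨((i : ℕ) + 1) * d, hlt i⟩
  have hY := hB.isCenteredGaussianFamily htd
  have e : ∀ i : Fin (m + 1),
      (((((i : ℕ) + 1) * d : ℕ) : ℝ) / n) = ((i : ℕ) + 1) * (d / n) := fun i => by
    push_cast
    ring
  simp only [e] at hsub
  refine le_trans ?_ hsub
  have hpow : (2 : ℝ) ^ (2 * H) ≤ 2 := by
    simpa using Real.rpow_le_rpow_of_exponent_le (one_le_two) hH'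
  refine le_trans ?_ (hY.mul_integral_iSup_pi_le
    (σ := (d / n : ℝ) ^ H * √((2 - 2 ^ (2 * H)) / 2)) (by positivity) fun c => ?_)
  · exact mul_le_mul_of_nonneg_left (integral_iSup_pi_gaussianReal_ge ht hq m) (by positivity)
  · have hd : (0 : ℝ) ≤ d / n := by positivity
    have key := mul_le_mul_of_nonneg_left (fbm_quadraticForm_lower (s := 2 * H) (by positivity)
      hH' m c) (a := (d / n : ℝ) ^ (2 * H)) (by positivity)
    rw [mul_pow, Real.sq_sqrt (by linarith), ← Real.rpow_two, ← Real.rpow_mul hd, mul_comm H 2,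
      mul_assoc]
    refine key.trans (le_of_eq ?_)
    rw [Finset.mul_sum]
    refine Finset.sum_congr rfl fun i _ => ?_
    rw [Finset.mul_sum]
    refine Finset.sum_congr rfl fun j _ => ?_
    rw [hB.2.2.2 _ _ (htd i) (htd j), ← sub_mul, abs_mul, abs_of_nonneg hd,
      Real.mul_rpow (by positivity) hd, Real.mul_rpow (by positivity) hd,
      Real.mul_rpow (by positivity) hd]
    ring

end IsFBM

lemma gaussianPDFReal_eq_zero_mul (t : ℝ) :
    gaussianPDFReal 0 1 t = gaussianPDFReal 0 1 0 * exp (-t ^ 2 / 2) := by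
  simp [gaussianPDFReal]

lemma gaussianPDFReal_zero_gt : 0.3988 < gaussianPDFReal 0 1 0 := by
  have h1 := Real.pi_lt_d4
  have h2 : √(2 * π) < 2.507 := by
    rw [Real.sqrt_lt' (by norm_num)]
    linarith
  have h3 : 0 < √(2 * π) := by positivity
  have e : gaussianPDFReal 0 1 0 = (√(2 * π))⁻¹ := by simp [gaussianPDFReal]
  rw [e, lt_inv_comm₀ (by norm_num) h3]
  exact h2.trans (by norm_num)

lemma gaussianPDFReal_zero_lt : gaussianPDFReal 0 1 0 < 0.4 := by
  have h1 := Real.pi_gt_d2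
  have h2 : 2.5 < √(2 * π) := by
    rw [Real.lt_sqrt (by norm_num)]
    linarith
  have e : gaussianPDFReal 0 1 0 = (√(2 * π))⁻¹ := by simp [gaussianPDFReal]
  rw [e, inv_lt_comm₀ (by positivity) (by norm_num)]
  exact lt_of_le_of_lt (by norm_num) h2

lemma one_div_five_sqrt_le {H a : ℝ} (ha : 0 < a) (h : 0.04 / a ^ 2 ≤ H) :
    1 / (5 * √H) ≤ a := by
  have hH : 0.2 / a ≤ √H := Real.le_sqrt_of_sq_le (by rw [div_pow]; norm_num at h ⊢; exact h)
  have : 0 < √H := lt_of_lt_of_le (by positivity) hH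
  rw [div_le_iff₀ ha] at hH
  rw [div_le_iff₀ (by positivity)]
  linarith

lemma main_term_le_of_rpow_le {H : ℝ} (hH : 0 < H) {n : ℕ} (hn : (2 : ℝ) ^ (1 / H) ≤ n)
    (hy : (n : ℝ) ^ H ≤ 16) :
    1 / (5 * √H) ≤ 6 * √(log n) / (n : ℝ) ^ H := by
  have hn0 : (0 : ℝ) < n := lt_of_lt_of_le (by positivity) hn
  have h1 : log 2 / H ≤ log n := by
    have := Real.log_le_log (by positivity) hn
    rwa [Real.log_rpow (by norm_num), one_div, inv_mul_eq_div] at this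
  have h2 : 0.8 / √H ≤ √(log n) := by
    refine Real.le_sqrt_of_sq_le (le_trans ?_ h1)
    rw [div_pow, Real.sq_sqrt hH.le]
    have := Real.log_two_gt_d9
    gcongr
    linarith
  have h3 : 0 < √H := by positivity
  calc 1 / (5 * √H) ≤ 6 * (0.8 / √H) / 16 := by
        rw [show 6 * (0.8 / √H) / 16 = 0.3 * (1 / √H) by ring,
          show 1 / (5 * √H) = 0.2 * (1 / √H) by field_simp; norm_num]
        gcongr
        norm_num
    _ ≤ 6 * √(log n) / (n : ℝ) ^ H := by gcongr

lemma half_div_ge {n : ℕ} (hn : 16 ≤ n) : (15 / 32 : ℝ) ≤ (n / 2 : ℕ) / n := by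
  have h : n ≤ 2 * (n / 2) + 1 := by lia
  have h' : (n : ℝ) ≤ 2 * (n / 2 : ℕ) + 1 := by exact_mod_cast h
  have hn' : (16 : ℝ) ≤ n := by exact_mod_cast hn
  rw [le_div_iff₀ (by linarith)]
  linarith

lemma half_div_le {n : ℕ} (hn : 16 ≤ n) : ((n / 2 : ℕ) : ℝ) / n ≤ 17 / 32 := by
  have h : 2 * (n / 2) ≤ n := by lia
  have h' : 2 * ((n / 2 : ℕ) : ℝ) ≤ n := by exact_mod_cast h
  have hn' : (16 : ℝ) ≤ n := by exact_mod_cast hn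
  rw [div_le_iff₀ (by linarith)]
  linarith

lemma IsFBM.main_term_le_expMaxGrid_of_ge {Ω : Type} [MeasurableSpace Ω] {μ : Measure Ω}
    [IsProbabilityMeasure μ] {H : ℝ} {B : ℝ → Ω → ℝ} (hB : IsFBM μ H B) (hH : 1 / 7 ≤ H)
    (hH1 : H ≤ 1) {n : ℕ} (hn : 16 ≤ n) :
    1 / (5 * √H) - 0.0107 ≤ expMaxGrid μ B n := by
  refine le_trans ?_ (hB.three_le_expMaxGrid (by linarith) (k := n / 2) (by lia) (by lia))
  have h1 := half_div_ge hn
  have h2 := half_div_le hn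
  have hg := gaussianPDFReal_zero_gt
  have key : ∀ b : ℝ, 0 ≤ b → b ≤ (15 / 32 : ℝ) ^ H → 0.1994 * (2 * b + 1) ≤
      gaussianPDFReal 0 1 0 / 2 * (((n / 2 : ℕ) / n : ℝ) ^ H + (1 - (n / 2 : ℕ) / n : ℝ) ^ H + 1) := by
    intro b hb hb'
    have u1 := Real.rpow_le_rpow (by norm_num) h1 (z := H) (by linarith)
    have u2 := Real.rpow_le_rpow (by norm_num)
      (show (15 / 32 : ℝ) ≤ 1 - (n / 2 : ℕ) / n by linarith) (z := H) (by linarith)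
    exact mul_le_mul (by linarith) (by linarith) (by linarith) (by linarith)
  rcases le_total H 0.27 with h | h
  · have h3 : (0.81 : ℝ) ≤ (15 / 32 : ℝ) ^ H := by
      refine le_trans ?_ (Real.rpow_le_rpow_of_exponent_ge (by norm_num) (by norm_num) h)
      have e : (15 / 32 : ℝ) ^ (0.27 : ℝ) = ((15 / 32 : ℝ) ^ (27 : ℕ)) ^ ((100 : ℕ) : ℝ)⁻¹ := by
        rw [← Real.rpow_natCast, ← Real.rpow_mul (by norm_num)]
        norm_num
      rw [e]
      refine (Real.le_rpow_inv_iff_of_pos (by norm_num) (by norm_num) (by norm_num)).2 ?_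
      rw [Real.rpow_natCast]
      norm_num
    have h4 := one_div_five_sqrt_le (H := H) (a := 0.53) (by norm_num)
      (le_trans (by norm_num) hH)
    have := key _ (by norm_num) h3
    linarith
  · have h3 : (15 / 32 : ℝ) ≤ (15 / 32 : ℝ) ^ H := by
      simpa using Real.rpow_le_rpow_of_exponent_ge (x := 15 / 32) (by norm_num) (by norm_num) hH1
    have h4 := one_div_five_sqrt_le (H := H) (a := 0.386) (by norm_num)
      (le_trans (by norm_num) h)
    have := key _ (by norm_num) h3
    linarith

lemma le_exp_of_pow_le {a : ℝ} {p q : ℕ} (hq : q ≠ 0) (h : a ^ q ≤ 2.7182818283 ^ p) :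
    a ≤ exp (p / q) := by
  refine le_of_pow_le_pow_left₀ hq (exp_pos _).le (h.trans ?_)
  rw [← Real.exp_nat_mul, mul_div_cancel₀ _ (by exact_mod_cast hq), ← Real.exp_one_rpow,
    Real.rpow_natCast]
  exact pow_le_pow_left₀ (by norm_num) Real.exp_one_gt_d9.le p

lemma exp_le_of_le_pow {a : ℝ} (ha : 0 ≤ a) {p q : ℕ} (hq : q ≠ 0)
    (h : 2.7182818286 ^ p ≤ a ^ q) : exp (p / q) ≤ a := by
  refine le_of_pow_le_pow_left₀ hq ha (le_trans ?_ h)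
  rw [← Real.exp_nat_mul, mul_div_cancel₀ _ (by exact_mod_cast hq), ← Real.exp_one_rpow,
    Real.rpow_natCast]
  exact pow_le_pow_left₀ (exp_pos _).le Real.exp_one_lt_d9.le p

lemma mul_sqrt_le_exp {x : ℝ} (hx : 7 ≤ x) : 3.45 * √x ≤ exp (0.32 * x) := by
  have h1 : √x ≤ (x + 7.0225) / 5.3 := by
    have := Real.sq_sqrt (show 0 ≤ x by linarith)
    rw [le_div_iff₀ (by norm_num)]
    linarith [sq_nonneg (√x - 2.65)]
  have h2 : (9.3 : ℝ) ≤ exp (2.24) := by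
    have := le_exp_of_pow_le (a := 9.3) (p := 56) (q := 25) (by norm_num) (by norm_num)
    norm_num at this ⊢
    exact this
  have h3 := Real.add_one_le_exp (0.32 * (x - 7))
  have h4 : exp (0.32 * x) = exp 2.24 * exp (0.32 * (x - 7)) := by
    rw [← Real.exp_add]
    ring_nf
  rw [h4]
  have h5 : (x + 7.0225) / 5.3 = (x - 7) * (10 / 53) + 140225 / 53000 := by ring
  linarith [mul_le_mul h2 h3 (by linarith) (exp_pos _).le]

lemma le_exp_half {x : ℝ} (hx : 7 ≤ x) : 33 ≤ exp (x / 2) := by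
  have := le_exp_of_pow_le (a := 33) (p := 7) (q := 2) (by norm_num) (by norm_num)
  exact this.trans (Real.exp_le_exp.2 (by push_cast; linarith))

lemma exp_half_add_two_le {x : ℝ} (hx : 7 ≤ x) : exp (x / 2) + 2 ≤ (5 / 3 : ℝ) ^ x := by
  have h1 := le_exp_half hx
  have h2 : exp 0.51 ≤ 5 / 3 := by
    have := exp_le_of_le_pow (a := 5 / 3) (p := 51) (q := 100) (by norm_num) (by norm_num)
      (by norm_num)
    norm_num at this ⊢
    exact this
  have h3 : exp (x / 2) * exp (0.01 * x) ≤ (5 / 3 : ℝ) ^ x := by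
    refine le_trans (le_of_eq ?_) (Real.rpow_le_rpow (exp_pos _).le h2 (by linarith))
    rw [← Real.exp_mul, ← Real.exp_add]
    ring_nf
  nlinarith [Real.add_one_le_exp (0.01 * x)]

/-- With `m = ⌊exp (x / 2)⌋` Gaussians, the level `0.6 √x` is exceeded with probability at
least `0.89`. -/
lemma gaussian_level_ge {x : ℝ} (hx : 7 ≤ x) :
    0.89 ≤ 1 - (1 - gaussianPDFReal 0 1 (0.6 * √x) / (0.6 * √x)) ^ ⌊exp (x / 2)⌋₊ := by
  set m := ⌊exp (x / 2)⌋₊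
  set q := gaussianPDFReal 0 1 (0.6 * √x) / (0.6 * √x) with hq
  have hE := le_exp_half hx
  have hm : exp (x / 2) < m + 1 := Nat.lt_floor_add_one _
  have hs : 0 < √x := Real.sqrt_pos.2 (by linarith)
  have h1 : q = gaussianPDFReal 0 1 0 * exp (-(0.18 * x)) / (0.6 * √x) := by
    rw [hq, gaussianPDFReal_eq_zero_mul, mul_pow, Real.sq_sqrt (by linarith)]
    ring_nf
  have h2 : 2.22 ≤ q * m := by
    have e1 : 0.3988 * exp (-(0.18 * x)) / (0.6 * √x) ≤ q := by
      rw [h1]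
      gcongr
      exact gaussianPDFReal_zero_gt.le
    have e2 : 32 / 33 * exp (x / 2) ≤ m := by linarith
    refine le_trans ?_ (mul_le_mul e1 e2 (by positivity) (le_trans (by positivity) e1))
    have e3 : exp (-(0.18 * x)) * exp (x / 2) = exp (0.32 * x) := by
      rw [← Real.exp_add]
      ring_nf
    rw [show 0.3988 * exp (-(0.18 * x)) / (0.6 * √x) * (32 / 33 * exp (x / 2)) =
      0.3988 * (32 / 33) * (exp (-(0.18 * x)) * exp (x / 2)) / (0.6 * √x) by ring, e3,
      le_div_iff₀ (by positivity)]
    linarith [mul_sqrt_le_exp hx]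
  have h3 : exp (-2.22) ≤ 0.11 := by
    have := le_exp_of_pow_le (a := 9.1) (p := 111) (q := 50) (by norm_num) (by norm_num)
    rw [Real.exp_neg, inv_le_comm₀ (exp_pos _) (by norm_num)]
    norm_num at this ⊢
    linarith
  have h4 : (0 : ℝ) ≤ 1 - q := by
    have hs1 : 1 ≤ √x := Real.one_le_sqrt.2 (by linarith)
    have : q ≤ 1 := by
      rw [hq, div_le_one (by positivity), gaussianPDFReal_eq_zero_mul]
      have u : exp (-(0.6 * √x) ^ 2 / 2) ≤ 1 :=
        Real.exp_le_one_iff.2 (by nlinarith [sq_nonneg (0.6 * √x)])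
      nlinarith [gaussianPDFReal_zero_lt, gaussianPDFReal_zero_gt]
    linarith
  have h5 : (1 - q) ^ m ≤ exp (-2.22) := by
    refine (pow_le_pow_left₀ h4 (Real.one_sub_le_exp_neg q) m).trans ?_
    rw [← Real.exp_nat_mul]
    exact Real.exp_le_exp.2 (by linarith)
  linarith

lemma IsFBM.main_term_le_expMaxGrid_of_le {Ω : Type} [MeasurableSpace Ω] {μ : Measure Ω}
    [IsProbabilityMeasure μ] {H : ℝ} {B : ℝ → Ω → ℝ} (hB : IsFBM μ H B) (hH : 0 < H)
    (hH7 : H ≤ 1 / 7) {n : ℕ} (hn : 0 < n) (hy : 16 ≤ (n : ℝ) ^ H) :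
    1 / (5 * √H) ≤ expMaxGrid μ B n := by
  obtain ⟨x, hx⟩ : ∃ x, x = 1 / H := ⟨_, rfl⟩
  have hx7 : 7 ≤ x := by
    rw [hx, le_div_iff₀ hH]
    linarith
  have hxH : x * H = 1 := by
    rw [hx]
    field_simp
  have hE := le_exp_half hx7
  set m := ⌊exp (x / 2)⌋₊ with hm
  have hmE : (m : ℝ) ≤ exp (x / 2) := Nat.floor_le (exp_pos _).le
  have hnE : exp (x / 2) ^ 5 ≤ n := by
    have h1 : (16 : ℝ) ^ x ≤ n := by
      have := Real.rpow_le_rpow (by norm_num) hy (z := x) (by linarith)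
      rwa [← Real.rpow_mul (by positivity), mul_comm H, hxH, Real.rpow_one] at this
    have h2 : exp 2.5 ≤ 16 := by
      have := exp_le_of_le_pow (a := 16) (p := 5) (q := 2) (by norm_num) (by norm_num)
        (by norm_num)
      norm_num at this ⊢
      exact this
    refine le_trans (le_of_eq ?_) ((Real.rpow_le_rpow (exp_pos _).le h2 (by linarith)).trans h1)
    rw [← Real.exp_nat_mul, ← Real.exp_mul]
    ring_nf
  have hnm : m * (m + 1) ≤ n := by
    have h1 : (m : ℝ) * (m + 1) ≤ n := by
      refine le_trans ?_ hnE
      have h3 : (1 : ℝ) ≤ exp (x / 2) := by linarith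
      calc (m : ℝ) * (m + 1) ≤ exp (x / 2) * (exp (x / 2) + exp (x / 2)) := by gcongr
        _ ≤ exp (x / 2) ^ 3 := by nlinarith [sq_nonneg (exp (x / 2))]
        _ ≤ exp (x / 2) ^ 5 := pow_le_pow_right₀ h3 (by norm_num)
    exact_mod_cast h1
  obtain ⟨d, hd⟩ : ∃ d, d = n / (m + 1) := ⟨_, rfl⟩
  have hmd : m ≤ d := hd ▸ (Nat.le_div_iff_mul_le m.succ_pos).2 hnm
  have hdn : (m + 1) * d ≤ n := hd ▸ Nat.mul_div_le n (m + 1)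
  have hnd : n < (m + 1) * (d + 1) := hd ▸ Nat.lt_mul_div_succ n m.succ_pos
  have hnd' : n ≤ d * (m + 2) := by nlinarith
  have hspace : 3 / 5 ≤ (d / n : ℝ) ^ H := by
    have h1 : ((3 / 5 : ℝ) ^ x) ≤ d / n := by
      have h2 : (n : ℝ) ≤ d * (m + 2) := by exact_mod_cast hnd'
      have h3 := exp_half_add_two_le hx7
      rw [show (3 / 5 : ℝ) = (5 / 3)⁻¹ by norm_num, Real.inv_rpow (by norm_num),
        le_div_iff₀ (by positivity), inv_mul_le_iff₀ (by positivity)]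
      nlinarith [(Nat.cast_nonneg d : (0 : ℝ) ≤ d)]
    have := Real.rpow_le_rpow (by positivity) h1 hH.le
    rwa [← Real.rpow_mul (by norm_num), hxH, Real.rpow_one] at this
  have hsd : 0.6248 ≤ √((2 - 2 ^ (2 * H)) / 2) := by
    have h1 : (2 : ℝ) ^ (2 * H) ≤ 1.2191 := by
      have h2 : (2 : ℝ) ^ (2 * H) ≤ (2 : ℝ) ^ (2 / 7 : ℝ) :=
        Real.rpow_le_rpow_of_exponent_le one_le_two (by linarith)
      refine h2.trans (le_of_pow_le_pow_left₀ (n := 7) (by norm_num) (by norm_num) ?_)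
      rw [← Real.rpow_natCast, ← Real.rpow_mul (by norm_num)]
      norm_num
    refine Real.le_sqrt_of_sq_le ?_
    norm_num at h1 ⊢
    linarith
  have hs2 : 2.6 ≤ √x := Real.le_sqrt_of_sq_le (by norm_num; linarith)
  have hpdf : gaussianPDFReal 0 1 (0.6 * √x) ≤ 0.6 * √x := by
    rw [gaussianPDFReal_eq_zero_mul]
    have u : exp (-(0.6 * √x) ^ 2 / 2) ≤ 1 :=
      Real.exp_le_one_iff.2 (by nlinarith [sq_nonneg (0.6 * √x)])
    nlinarith [gaussianPDFReal_zero_lt, gaussianPDFReal_zero_gt]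
  refine le_trans ?_ (hB.spaced_le_expMaxGrid hH (by linarith) hn hdn (by positivity) hpdf)
  have hlev := gaussian_level_ge hx7
  rw [← hm] at hlev
  have hx' : 1 / (5 * √H) = 0.2 * √x := by
    rw [hx, one_div H, Real.sqrt_inv, one_div, mul_inv]
    norm_num
  rw [hx']
  calc 0.2 * √x ≤ 3 / 5 * 0.6248 * (0.6 * √x * 0.89) := by linarith
    _ ≤ _ := by gcongr

/-- for `n ≥ 2^{1/H}`, `f(H,n) ≥ 1/(5√H) - 6√(ln n)/n^H - 0.0107`. -/
theorem stmt17 {Ω : Type} [MeasurableSpace Ω] (μ : Measure Ω) [IsProbabilityMeasure μ]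
    (H : ℝ) (hH : H ∈ Ioo (0:ℝ) 1) (B : ℝ → Ω → ℝ) (hB : IsFBM μ H B)
    (n : ℕ) (hn : (2:ℝ) ^ (1 / H) ≤ (n : ℝ)) :
    1 / (5 * Real.sqrt H) - 6 * Real.sqrt (Real.log n) / (n : ℝ) ^ H - 0.0107 ≤
      expMaxGrid μ B n := by
  obtain ⟨hH0, hH1⟩ := hH
  have hn0 : 0 < n := by
    have : (0 : ℝ) < n := lt_of_lt_of_le (by positivity) hn
    exact_mod_cast this
  rcases le_total ((n : ℝ) ^ H) 16 with hy | hy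
  · have h1 := main_term_le_of_rpow_le hH0 hn hy
    have h2 := hB.expMaxGrid_nonneg_s17 hH0 hn0
    linarith
  have hmid : 0 ≤ 6 * √(log n) / (n : ℝ) ^ H := by positivity
  rcases le_total H (1 / 7) with h | h
  · linarith [hB.main_term_le_expMaxGrid_of_le hH0 h hn0 hy]
  · have hn16 : 16 ≤ n := by
      have h1 : (n : ℝ) ^ H ≤ n := by
        simpa using Real.rpow_le_rpow_of_exponent_le
          (show (1 : ℝ) ≤ n by exact_mod_cast hn0) hH1.le
      exact_mod_cast hy.trans h1
    linarith [hB.main_term_le_expMaxGrid_of_ge h hH1.le hn16]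
end
end
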